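/- arXiv:0902.4612 — 3 statements merged into one kernel-verified Lean document; each statement's English description precedes it below -/
import Mathlib

section
/- In the ordered field of the reals R = (ℝ, +, ·, <, 0, 1), let p(x₁,x₂) be the closure under logical consequence of the set of formulas {x₁ > 0} ∪ {x₁ < a : a ∈ ℝ, a > 0} ∪ {0 < x₂ ∧ x₂ < x₁} ∪ {x₂ < a·x₁ : a ∈ ℝ, a > 0} ∪ {a·x₁^q < x₂ : a ∈ ℝ, a > 0, q ∈ ℚ, q > 1}, and let F : ℝ² → ℝ be F(x,y) = min(y/x, 1) if x > 0 and y > 0, and F(x,y) = 0 otherwise. Then: (i) p is a consistent and complete 2-type over R; and (ii) for every semialgebraic set D ⊆ ℝ² whose defining formula belongs to p, the restriction of F to D does not extend to a continuous function on the topological closure cl(D). -/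
/-!
Formulas are identified with the semialgebraic sets they define, so `p` becomes the set of
semialgebraic members of the filter `pFilter` generated by the defining conditions
(`mem_pType_iff`).

Completeness rests on quantifier elimination for the reals, in a semantic form (`exists_signs`):
whether a point satisfies a formula depends only on the signs of finitely many polynomials there.
The quantifier step is the theorem `good`, in the style of Cohen and Hörmander. Given finitely many
polynomials in one variable over a ring `A`, there are finitely many elements of `A` such that any
two homomorphisms `A → ℝ` giving these elements the same signs yield families of real polynomials
with the same sign diagram, meaning that an order automorphism of `ℝ` carries the signs of one
family to those of the other. A quantifier over the last variable then takes the same value at both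
points. The proof is by induction on degree. A polynomial of top degree is replaced by its
derivative and its pseudo-remainders modulo the other members; the latter give its sign at the
roots of the others, the former its monotonicity in between, and together these determine where
its own roots lie (`Compat.exists_fix`).

Along `pFilter` the monomials in two variables are totally ordered by dominance: lower total degree
wins, and for equal total degree the lower degree in `x₂` does (`monomial_isLittleO`). Indeed
`x₁ → 0`, `x₂ = o(x₁)`, and `x₁ ^ (k + 1) = o(x₂ ^ k)` by the condition with exponent
`q = 1 + 1 / k`. Hence every nonzero polynomial has eventually the sign of its dominant coefficient
(`exists_eventually_sign`), and every semialgebraic set or its complement lies in `pFilter`.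

Finally, a member of `pFilter` contains, for every small slope `b > 0`, an initial segment of the
line `x₂ = b x₁` (`eventually_lines`). This gives consistency. On such a segment `F` is constantly
`b`, so a continuous extension would take the value `b` at the origin for all small `b` at once
(`not_extends`).
-/

open FirstOrder FirstOrder.Language Set Topology Filter

namespace OMinPaper

/-- An `n`-ary function is `A`-definable if its graph is an `A`-definable set. -/
def DefFun (L : FirstOrder.Language) {M : Type*} [L.Structure M] (A : Set M) {n : ℕ}
    (f : (Fin n → M) → M) : Prop :=
  A.Definable L {p : Fin (n + 1) → M | f (Fin.init p) = p (Fin.last n)}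

/-- A unary function is `A`-definable if its graph is an `A`-definable set. -/
def DefFun₁ (L : FirstOrder.Language) {M : Type*} [L.Structure M] (A : Set M)
    (f : M → M) : Prop :=
  A.Definable L {p : Fin 2 → M | f (p 0) = p 1}

/-- An `n`-ary partial function with domain `Ω` is `A`-definable if its graph
(restricted to `Ω`) is an `A`-definable set. -/
def DefFunOn (L : FirstOrder.Language) {M : Type*} [L.Structure M] (A : Set M) {n : ℕ}
    (Ω : Set (Fin n → M)) (f : (Fin n → M) → M) : Prop :=
  A.Definable L {p : Fin (n + 1) → M | Fin.init p ∈ Ω ∧ f (Fin.init p) = p (Fin.last n)}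

/-- A subset of a linear order is a point or an open interval (with endpoints
possibly `±∞`). -/
def IsIntervalOrPoint {M : Type*} [LinearOrder M] (s : Set M) : Prop :=
  (∃ a, s = {a}) ∨ (∃ a b, s = Set.Ioo a b) ∨ (∃ a, s = Set.Iio a) ∨
    (∃ a, s = Set.Ioi a) ∨ s = Set.univ

/-- `M` is an o-minimal structure: the order is definable without parameters, it is a dense
linear order without endpoints, and every subset of `M` definable with parameters is a finite
union of points and open intervals. -/
def IsOMinimal (L : FirstOrder.Language) (M : Type*) [L.Structure M] [LinearOrder M] : Prop :=
  (∅ : Set M).Definable L {p : Fin 2 → M | p 0 < p 1} ∧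
  DenselyOrdered M ∧ NoMinOrder M ∧ NoMaxOrder M ∧
  ∀ s : Set M, (Set.univ : Set M).Definable₁ L s →
    ∃ t : Finset (Set M), (∀ u ∈ t, IsIntervalOrPoint u) ∧ s = ⋃₀ ↑t

/-- The definable closure of a parameter set `A`: elements whose singleton is `A`-definable. -/
def dcl (L : FirstOrder.Language) {M : Type*} [L.Structure M] (A : Set M) : Set M :=
  {b | A.Definable₁ L {b}}

/-- `c` is principal above `β` over `A`: `β ∈ dcl(A)`, `β < c`, and no point of `dcl(A)` lies
in the interval `(β, c)`. -/
def PrincipalAbove (L : FirstOrder.Language) {M : Type*} [L.Structure M] [LinearOrder M]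
    (A : Set M) (c β : M) : Prop :=
  β ∈ dcl L A ∧ β < c ∧ ∀ d ∈ dcl L A, d ∉ Set.Ioo β c

/-- `c` is principal below `β` over `A`. -/
def PrincipalBelow (L : FirstOrder.Language) {M : Type*} [L.Structure M] [LinearOrder M]
    (A : Set M) (c β : M) : Prop :=
  β ∈ dcl L A ∧ c < β ∧ ∀ d ∈ dcl L A, d ∉ Set.Ioo c β

/-- `c` realizes the principal type near `+∞` over `A`. -/
def NearPosInf (L : FirstOrder.Language) {M : Type*} [L.Structure M] [LinearOrder M]
    (A : Set M) (c : M) : Prop :=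
  ∀ d ∈ dcl L A, d < c

/-- `c` realizes the principal type near `-∞` over `A`. -/
def NearNegInf (L : FirstOrder.Language) {M : Type*} [L.Structure M] [LinearOrder M]
    (A : Set M) (c : M) : Prop :=
  ∀ d ∈ dcl L A, c < d

/-- `tp(c/A)` is principal. -/
def Principal (L : FirstOrder.Language) {M : Type*} [L.Structure M] [LinearOrder M]
    (A : Set M) (c : M) : Prop :=
  c ∉ dcl L A ∧ ((∃ β, PrincipalAbove L A c β) ∨ (∃ β, PrincipalBelow L A c β) ∨
    NearPosInf L A c ∨ NearNegInf L A c)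

/-- Two (sets of realizations of) 1-types `P` and `Q` are interdefinable over `B`: there are
`B`-definable unary functions mapping every realization of one to a realization of the other. -/
def Interdef (L : FirstOrder.Language) {M : Type*} [L.Structure M] (B : Set M)
    (P Q : Set M) : Prop :=
  (∃ f : M → M, DefFun₁ L B f ∧ ∀ x ∈ P, f x ∈ Q) ∧
  (∃ g : M → M, DefFun₁ L B g ∧ ∀ y ∈ Q, g y ∈ P)

/-- All principal types are interdefinable over `A`. -/
def AllPrincipalInterdefOver (L : FirstOrder.Language) {M : Type*} [L.Structure M]
    [LinearOrder M] (A : Set M) : Prop :=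
  (∀ b : M, Interdef L (A ∪ {b}) {x | PrincipalAbove L (A ∪ {b}) x b}
      {x | NearPosInf L (A ∪ {b}) x}) ∧
  (∀ b c : M, Interdef L (A ∪ {b, c}) {x | PrincipalAbove L (A ∪ {b, c}) x b}
      {x | PrincipalBelow L (A ∪ {b, c}) x c}) ∧
  Interdef L A {x | NearPosInf L A x} {x | NearNegInf L A x}

/-- All principal types are interdefinable in the theory of `M`. -/
def AllPrincipalInterdef (L : FirstOrder.Language) (M : Type*) [L.Structure M]
    [LinearOrder M] : Prop :=
  ∀ A : Set M, AllPrincipalInterdefOver L A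

/-- `X` is cofinal at `a` in `N`: `X ∩ N` is cofinal in `{x ∈ N : x < a}`. -/
def CofinalAt {M : Type*} [LinearOrder M] (X N : Set M) (a : M) : Prop :=
  ∀ y ∈ N, y < a → ∃ x ∈ X ∩ N, x < a ∧ y ≤ x

/-- `X` is coinitial at `a` in `N`: `X ∩ N` is coinitial in `{x ∈ N : x > a}`. -/
def CoinitialAt {M : Type*} [LinearOrder M] (X N : Set M) (a : M) : Prop :=
  ∀ y ∈ N, a < y → ∃ x ∈ X ∩ N, a < x ∧ x ≤ y

/-- `tp(a/B)` is in scale on `A`: some `B`-definable unary function maps `dcl(A)` to a set both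
cofinal and coinitial at `a` in `dcl(B)`. -/
def InScale (L : FirstOrder.Language) {M : Type*} [L.Structure M] [LinearOrder M]
    (A B : Set M) (a : M) : Prop :=
  ∃ f : M → M, DefFun₁ L B f ∧ CofinalAt (f '' dcl L A) (dcl L B) a ∧
    CoinitialAt (f '' dcl L A) (dcl L B) a

/-- `tp(a/B)` is near scale on `A`. -/
def NearScale (L : FirstOrder.Language) {M : Type*} [L.Structure M] [LinearOrder M]
    (A B : Set M) (a : M) : Prop :=
  ¬ InScale L A B a ∧ ∃ f : M → M, DefFun₁ L B f ∧
    (CofinalAt (f '' dcl L A) (dcl L B) a ∨ CoinitialAt (f '' dcl L A) (dcl L B) a)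

/-- `tp(a/B)` is out of scale on `A`: no `B`-definable unary image of `dcl(A)` is cofinal or
coinitial at `a` in `dcl(B)`. -/
def OutOfScale (L : FirstOrder.Language) {M : Type*} [L.Structure M] [LinearOrder M]
    (A B : Set M) (a : M) : Prop :=
  ∀ f : M → M, DefFun₁ L B f →
    ¬ CofinalAt (f '' dcl L A) (dcl L B) a ∧ ¬ CoinitialAt (f '' dcl L A) (dcl L B) a

/-- `a ≺_A b` (relative to the distinguished `∅`-definable element `z`). -/
def Prec (L : FirstOrder.Language) {M : Type*} [L.Structure M] [LinearOrder M]
    (z : M) (A : Set M) (a b : M) : Prop :=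
  ∃ a' ∈ dcl L (A ∪ {a}), z < a' ∧ ∀ d ∈ dcl L (A ∪ {b}), d ∉ Set.Ioo z a'

/-- `a ∼_A b`. -/
def Sim (L : FirstOrder.Language) {M : Type*} [L.Structure M] [LinearOrder M]
    (z : M) (A : Set M) (a b : M) : Prop :=
  ¬ Prec L z A a b ∧ ¬ Prec L z A b a

/-- `a ≾_A b`. -/
def PrecSim (L : FirstOrder.Language) {M : Type*} [L.Structure M] [LinearOrder M]
    (z : M) (A : Set M) (a b : M) : Prop :=
  Prec L z A a b ∨ Sim L z A a b

/-- The set of coordinates of `c̄` before index `i`, as a parameter set. -/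
def below {M : Type*} {n : ℕ} (c : Fin n → M) (i : Fin n) : Set M :=
  c '' {k | k < i}

/-- The tuple `c̄` realizes a decreasing type over `A`: `c_i ≿_i c_j` for `i < j`. -/
def Decreasing (L : FirstOrder.Language) {M : Type*} [L.Structure M] [LinearOrder M]
    (z : M) (A : Set M) {n : ℕ} (c : Fin n → M) : Prop :=
  ∀ i j : Fin n, i < j → PrecSim L z (A ∪ below c i) (c j) (c i)

/-- A curve `γ̄` (defined for `t` with `z < t < u`) is non-oscillatory: each definable function
`f` of `(t, γ̄(t))` either is eventually equal to, or eventually different from, any fixed value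
`z₀`, as `t → z⁺`. -/
def NonOscillatory (L : FirstOrder.Language) {M : Type*} [L.Structure M] [LinearOrder M]
    (z : M) {n : ℕ} (γ : M → Fin n → M) : Prop :=
  ∀ f : (Fin (n + 1) → M) → M, DefFun L (Set.univ : Set M) f → ∀ z₀ : M,
    ∃ s, z < s ∧ ((∀ t ∈ Set.Ioo z s, f (Fin.cons t (γ t)) = z₀) ∨
      (∀ t ∈ Set.Ioo z s, f (Fin.cons t (γ t)) ≠ z₀))

end OMinPaper

noncomputable local instance : FirstOrder.Ring.CompatibleRing ℝ :=
  FirstOrder.Ring.compatibleRingOfRing ℝ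

/-- A set is semialgebraic iff it is definable with parameters in the ordered field of the
reals; since the order is `∅`-definable from the ring operations over `ℝ`, this is the same
as definability with parameters in the language of rings. -/
def OMinPaper.Semialgebraic {k : ℕ} (s : Set (Fin k → ℝ)) : Prop :=
  (Set.univ : Set ℝ).Definable FirstOrder.Language.ring s

/-- The generating conditions of the type `p(x₁,x₂)`, as (semialgebraic) subsets of `ℝ²`:
`x₁ > 0`; `x₁ < a` (all real `a > 0`); `0 < x₂ ∧ x₂ < x₁`; `x₂ < a·x₁` (all real `a > 0`);
and `a·x₁^q < x₂` (all real `a > 0` and rational `q > 1`, using the real power `x₁^q`). -/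
def OMinPaper.pGens : Set (Set (Fin 2 → ℝ)) :=
  {{v | 0 < v 0}} ∪
  {s | ∃ a : ℝ, 0 < a ∧ s = {v | v 0 < a}} ∪
  {{v | 0 < v 1 ∧ v 1 < v 0}} ∪
  {s | ∃ a : ℝ, 0 < a ∧ s = {v | v 1 < a * v 0}} ∪
  {s | ∃ a : ℝ, 0 < a ∧ ∃ q : ℚ, 1 < q ∧ s = {v | a * (v 0) ^ (q : ℝ) < v 1}}

/-- The type `p(x₁,x₂)`: the closure of the generating conditions under logical consequence,
rendered via definable sets: a semialgebraic set belongs to `p` iff it contains a finite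
intersection of generating conditions. -/
def OMinPaper.pType : Set (Set (Fin 2 → ℝ)) :=
  {D | OMinPaper.Semialgebraic D ∧
    ∃ G : Finset (Set (Fin 2 → ℝ)), (∀ s ∈ G, s ∈ OMinPaper.pGens) ∧
      ∀ v : Fin 2 → ℝ, (∀ s ∈ G, v ∈ s) → v ∈ D}

/-- The function `F(x,y) = min(y/x, 1)` on the open first quadrant and `0` elsewhere. -/
noncomputable def OMinPaper.Fex (v : Fin 2 → ℝ) : ℝ :=
  if 0 < v 0 ∧ 0 < v 1 then min (v 1 / v 0) 1 else 0

namespace OMinPaper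

/-! ### Order isomorphisms of the real line -/

/-- The order automorphism that is the identity up to `m` and stretches by `c` beyond `m`. -/
lemma exists_stretch (m c : ℝ) (hc : 0 < c) :
    ∃ k : ℝ ≃o ℝ, (∀ t ≤ m, k t = t) ∧ ∀ t, m < t → k t = m + c * (t - m) := by
  let f : ℝ → ℝ := fun t => if t ≤ m then t else m + c * (t - m)
  have hf : StrictMono f := by
    intro s t hst
    simp only [f]
    split_ifs with h1 h2 h2
    · exact hst
    · have : 0 < c * (t - m) := mul_pos hc (by linarith)
      linarith
    · linarith
    · have : c * (s - m) < c * (t - m) := mul_lt_mul_of_pos_left (by linarith) hc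
      linarith
  have hs : Function.Surjective f := by
    intro y
    by_cases hy : y ≤ m
    · exact ⟨y, by simp [f, hy]⟩
    · have : 0 < (y - m) / c := div_pos (by linarith) hc
      refine ⟨m + (y - m) / c, ?_⟩
      simp only [f]
      rw [if_neg (by linarith)]
      field_simp
      ring
  refine ⟨hf.orderIsoOfSurjective f hs, fun t ht => ?_, fun t ht => ?_⟩
  · simp [f, ht]
  · simp [f, ht]

/-- A strictly monotone map on a finite set of reals extends to an order automorphism of `ℝ`. -/
lemma exists_extend (φ : ℝ → ℝ) (S : Finset ℝ) (h : StrictMonoOn φ S) :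
    ∃ g : ℝ ≃o ℝ, ∀ s ∈ S, g s = φ s := by
  induction S using Finset.induction_on_max with
  | empty => exact ⟨OrderIso.refl ℝ, by simp⟩
  | insert a S ha ih =>
    obtain ⟨g, hg⟩ := ih (h.mono (by simp))
    rcases S.eq_empty_or_nonempty with rfl | hS
    · exact ⟨OrderIso.addRight (φ a - a), by simp⟩
    · set m := S.max' hS with hm
      have hmS : m ∈ S := S.max'_mem hS
      have hma : m < a := ha m hmS
      have hφ : φ m < φ a := h (by simp [hmS]) (by simp) hma
      have hgm : g m = φ m := hg m hmS
      have hga : φ m < g a := hgm ▸ g.strictMono hma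
      obtain ⟨k, hk1, hk2⟩ := exists_stretch (φ m) ((φ a - φ m) / (g a - φ m))
        (div_pos (by linarith) (by linarith))
      refine ⟨g.trans k, fun s hs => ?_⟩
      rcases Finset.mem_insert.1 hs with rfl | hs
      · rw [OrderIso.trans_apply, hk2 _ hga, div_mul_cancel₀ _ (by linarith)]
        ring
      · rw [OrderIso.trans_apply, hk1, hg s hs]
        rw [← hgm]
        exact g.monotone (S.le_max' s hs)

/-! ### Signs of real polynomials -/

lemma sign_eq_of_ne_zero {f : ℝ → ℝ} (hf : Continuous f) {s t : ℝ}
    (h : ∀ x ∈ uIcc s t, f x ≠ 0) : SignType.sign (f s) = SignType.sign (f t) := by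
  by_contra hne
  have h0 : (0 : ℝ) ∈ uIcc (f s) (f t) := by
    rcases lt_or_gt_of_ne (h s left_mem_uIcc) with h1 | h1 <;>
    rcases lt_or_gt_of_ne (h t right_mem_uIcc) with h2 | h2
    · simp [sign_neg h1, sign_neg h2] at hne
    · exact mem_uIcc.2 (Or.inl ⟨h1.le, h2.le⟩)
    · exact mem_uIcc.2 (Or.inr ⟨h2.le, h1.le⟩)
    · simp [sign_pos h1, sign_pos h2] at hne
  obtain ⟨x, hx, hx0⟩ := intermediate_value_uIcc hf.continuousOn h0
  exact h x hx hx0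

lemma exists_slope (p : Polynomial ℝ) {u t : ℝ} (h : u < t) :
    ∃ x ∈ Ioo u t, p.eval t - p.eval u = p.derivative.eval x * (t - u) := by
  obtain ⟨x, hx, he⟩ := exists_hasDerivAt_eq_slope (fun x => p.eval x)
    (fun x => p.derivative.eval x) h p.continuous.continuousOn (fun x _ => p.hasDerivAt x)
  refine ⟨x, hx, ?_⟩
  rw [he, div_mul_cancel₀ _ (by linarith)]

lemma sign_mul_pos {a b : ℝ} (hb : 0 < b) :
    SignType.sign (a * b) = SignType.sign a := by
  rw [sign_mul, sign_pos hb, mul_one]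

/-- If `p'` has no zero on `(u, t]`, then `p t - p u` has the sign of `p' t`. -/
lemma sign_sub_left (p : Polynomial ℝ) {u t : ℝ} (h : u < t)
    (hD : ∀ x ∈ Ioc u t, p.derivative.eval x ≠ 0) :
    SignType.sign (p.eval t - p.eval u) = SignType.sign (p.derivative.eval t) := by
  obtain ⟨x, hx, he⟩ := exists_slope p h
  rw [he, sign_mul_pos (by linarith)]
  refine sign_eq_of_ne_zero p.derivative.continuous fun y hy => hD y ?_
  rw [uIcc_of_le hx.2.le] at hy
  exact ⟨hx.1.trans_le hy.1, hy.2⟩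

/-- If `p'` has no zero on `[t, u)`, then `p u - p t` has the sign of `p' t`. -/
lemma sign_sub_right (p : Polynomial ℝ) {u t : ℝ} (h : t < u)
    (hD : ∀ x ∈ Ico t u, p.derivative.eval x ≠ 0) :
    SignType.sign (p.eval u - p.eval t) = SignType.sign (p.derivative.eval t) := by
  obtain ⟨x, hx, he⟩ := exists_slope p h
  rw [he, sign_mul_pos (by linarith)]
  refine sign_eq_of_ne_zero p.derivative.continuous fun y hy => hD y ?_
  rw [uIcc_of_ge hx.1.le] at hy
  exact ⟨hy.1, hy.2.trans_lt hx.2⟩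

/-- A nonconstant polynomial that is increasing on `(-∞, t]` is negative somewhere there. -/
lemma exists_neg_left (p : Polynomial ℝ) (hp : 0 < p.degree) {t : ℝ}
    (hD : ∀ x ≤ t, p.derivative.eval x ≠ 0) (ht : 0 < p.derivative.eval t) :
    ∃ a < t, p.eval a < 0 := by
  obtain ⟨a, ha, hat⟩ := (((p.abs_tendsto_atBot hp).eventually_gt_atTop |p.eval t|).and
    (eventually_lt_atBot t)).exists
  refine ⟨a, hat, ?_⟩
  have h1 := sign_sub_left p hat (fun x hx => hD x hx.2)
  rw [sign_pos ht, sign_eq_one_iff] at h1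
  by_contra hneg
  rw [abs_of_nonneg (not_lt.1 hneg)] at ha
  have := le_abs_self (p.eval t)
  linarith

/-- A nonconstant polynomial that is increasing on `[t, ∞)` is positive somewhere there. -/
lemma exists_pos_right (p : Polynomial ℝ) (hp : 0 < p.degree) {t : ℝ}
    (hD : ∀ x, t ≤ x → p.derivative.eval x ≠ 0) (ht : 0 < p.derivative.eval t) :
    ∃ a, t < a ∧ 0 < p.eval a := by
  obtain ⟨a, ha, hat⟩ := (((p.abs_tendsto_atTop hp).eventually_gt_atTop |p.eval t|).and
    (eventually_gt_atTop t)).exists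
  refine ⟨a, hat, ?_⟩
  have h1 := sign_sub_right p hat (fun x hx => hD x hx.1)
  rw [sign_pos ht, sign_eq_one_iff] at h1
  by_contra hneg
  rw [abs_of_nonpos (not_lt.1 hneg)] at ha
  have := neg_abs_le (p.eval t)
  linarith

/-- An order automorphism fixing all roots of a polynomial preserves its sign. -/
lemma sign_eval_fix (P : Polynomial ℝ) {Z : Finset ℝ} {g : ℝ ≃o ℝ} (hg : ∀ z ∈ Z, g z = z)
    (hP : ∀ t, P.eval t = 0 → t ∈ Z) (t : ℝ) :
    SignType.sign (P.eval (g t)) = SignType.sign (P.eval t) := by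
  by_cases htZ : t ∈ Z
  · rw [hg t htZ]
  · refine sign_eq_of_ne_zero P.continuous fun x hx h0 => ?_
    have hxZ := hP x h0
    have hgx := hg x hxZ
    rcases mem_uIcc.1 hx with ⟨h1, h2⟩ | ⟨h1, h2⟩
    · rw [← hgx, g.le_iff_le] at h1
      exact htZ (le_antisymm h1 h2 ▸ hxZ)
    · rw [← hgx, g.le_iff_le] at h2
      exact htZ (le_antisymm h1 h2 ▸ hxZ)

/-! ### Adding one polynomial to a sign diagram -/

/-- `Compat Z p p' h`: the order automorphism `h` matches the signs of the derivatives of `p`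
and `p'` everywhere, and the signs of `p` and `p'` on a finite set `Z` that contains all critical
points of `p`. -/
structure Compat (Z : Finset ℝ) (p p' : Polynomial ℝ) (h : ℝ ≃o ℝ) : Prop where
  deg : 0 < p.degree
  deg' : 0 < p'.degree
  sign_deriv : ∀ t, SignType.sign (p.derivative.eval t) =
    SignType.sign (p'.derivative.eval (h t))
  mem : ∀ t, p.derivative.eval t = 0 → t ∈ Z
  sign_eq : ∀ z ∈ Z, SignType.sign (p.eval z) = SignType.sign (p'.eval (h z))

namespace Compat

variable {Z : Finset ℝ} {p p' : Polynomial ℝ} {h : ℝ ≃o ℝ}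

lemma neg (H : Compat Z p p' h) : Compat Z (-p) (-p') h where
  deg := by simpa using H.deg
  deg' := by simpa using H.deg'
  sign_deriv t := by simp [Left.sign_neg, H.sign_deriv t]
  mem t ht := H.mem t (by simpa using ht)
  sign_eq z hz := by simp [Left.sign_neg, H.sign_eq z hz]

lemma symm (H : Compat Z p p' h) : Compat (Z.image h) p' p h.symm where
  deg := H.deg'
  deg' := H.deg
  sign_deriv t := by simpa using (H.sign_deriv (h.symm t)).symm
  mem t ht := by
    refine Finset.mem_image.2 ⟨h.symm t, H.mem _ ?_, by simp⟩
    rw [← sign_eq_zero_iff, H.sign_deriv]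
    simp [ht]
  sign_eq z hz := by
    obtain ⟨x, hx, rfl⟩ := Finset.mem_image.1 hz
    simpa using (H.sign_eq x hx).symm

lemma deriv_ne (H : Compat Z p p' h) {t : ℝ} (ht : p.derivative.eval t ≠ 0) :
    p'.derivative.eval (h t) ≠ 0 := by
  rw [← sign_ne_zero, ← H.sign_deriv t, sign_ne_zero]
  exact ht

/-- Left of a root `y` where `p` is increasing, `p' ∘ h` is negative at some point that no element
of `Z` separates from `y`. -/
lemma exists_left (H : Compat Z p p' h) {y : ℝ} (hy : p.eval y = 0)
    (hD : 0 < p.derivative.eval y) :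
    ∃ a < y, p'.eval (h a) < 0 ∧ ∀ z ∈ Z, z < y → z ≤ a := by
  rcases (Z.filter (· < y)).eq_empty_or_nonempty with he | hne
  · have hno : ∀ z ∈ Z, ¬ z < y := fun z hz hzy => by
      have : z ∈ Z.filter (· < y) := Finset.mem_filter.2 ⟨hz, hzy⟩
      simp [he] at this
    have hDne : ∀ x ≤ y, p.derivative.eval x ≠ 0 := fun x hx h0 => by
      rcases hx.lt_or_eq with hx | rfl
      · exact hno x (H.mem x h0) hx
      · exact hD.ne' h0
    obtain ⟨a, ha, hneg⟩ := exists_neg_left p' H.deg' (t := h y)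
      (fun x hx => by
        have := H.deriv_ne (hDne (h.symm x) (by simpa using h.symm.monotone hx))
        simpa using this)
      (by rw [← sign_eq_one_iff, ← H.sign_deriv, sign_eq_one_iff]; exact hD)
    exact ⟨h.symm a, by simpa using h.symm.strictMono ha, by simpa using hneg,
      fun z hz hzy => (hno z hz hzy).elim⟩
  · set a := (Z.filter (· < y)).max' hne with hadef
    have ha := Finset.mem_filter.1 ((Z.filter (· < y)).max'_mem hne)
    rw [← hadef] at ha
    have hmax : ∀ z ∈ Z, z < y → z ≤ a := fun z hz hzy =>
      Finset.le_max' _ _ (Finset.mem_filter.2 ⟨hz, hzy⟩)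
    refine ⟨a, ha.2, ?_, hmax⟩
    have h1 := sign_sub_left p ha.2 (fun x hx h0 => by
      rcases hx.2.lt_or_eq with h2 | rfl
      · exact absurd (hmax x (H.mem x h0) h2) (not_le.2 hx.1)
      · exact hD.ne' h0)
    rw [sign_pos hD, sign_eq_one_iff, hy] at h1
    rw [← sign_eq_neg_one_iff, ← H.sign_eq a ha.1, sign_eq_neg_one_iff]
    linarith

/-- Right of a root `y` where `p` is increasing, `p' ∘ h` is positive at some point that no element
of `Z` separates from `y`. -/
lemma exists_right (H : Compat Z p p' h) {y : ℝ} (hy : p.eval y = 0)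
    (hD : 0 < p.derivative.eval y) :
    ∃ b, y < b ∧ 0 < p'.eval (h b) ∧ ∀ z ∈ Z, y < z → b ≤ z := by
  rcases (Z.filter (y < ·)).eq_empty_or_nonempty with he | hne
  · have hno : ∀ z ∈ Z, ¬ y < z := fun z hz hzy => by
      have : z ∈ Z.filter (y < ·) := Finset.mem_filter.2 ⟨hz, hzy⟩
      simp [he] at this
    have hDne : ∀ x, y ≤ x → p.derivative.eval x ≠ 0 := fun x hx h0 => by
      rcases hx.lt_or_eq with hx | rfl
      · exact hno x (H.mem x h0) hx
      · exact hD.ne' h0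
    obtain ⟨a, ha, hneg⟩ := exists_pos_right p' H.deg' (t := h y)
      (fun x hx => by
        have := H.deriv_ne (hDne (h.symm x) (by simpa using h.symm.monotone hx))
        simpa using this)
      (by rw [← sign_eq_one_iff, ← H.sign_deriv, sign_eq_one_iff]; exact hD)
    exact ⟨h.symm a, by simpa using h.symm.strictMono ha, by simpa using hneg,
      fun z hz hzy => (hno z hz hzy).elim⟩
  · set a := (Z.filter (y < ·)).min' hne with hadef
    have ha := Finset.mem_filter.1 ((Z.filter (y < ·)).min'_mem hne)
    rw [← hadef] at ha
    have hmin : ∀ z ∈ Z, y < z → a ≤ z := fun z hz hzy =>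
      Finset.min'_le _ _ (Finset.mem_filter.2 ⟨hz, hzy⟩)
    refine ⟨a, ha.2, ?_, hmin⟩
    have h1 := sign_sub_right p ha.2 (fun x hx h0 => by
      rcases hx.1.lt_or_eq with h2 | rfl
      · exact absurd (hmin x (H.mem x h0) h2) (not_le.2 hx.2)
      · exact hD.ne' h0)
    rw [sign_pos hD, sign_eq_one_iff, hy] at h1
    rw [← sign_eq_one_iff, ← H.sign_eq a ha.1, sign_eq_one_iff]
    linarith

/-- A root of `p` in a component of `ℝ \ Z` yields a root of `p' ∘ h` in the same component. -/
lemma exists_root (H : Compat Z p p' h) {y : ℝ} (hy : p.eval y = 0) (hyZ : y ∉ Z) :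
    ∃ y', p'.eval (h y') = 0 ∧ ∀ z ∈ Z, (z < y → z < y') ∧ (y < z → y' < z) := by
  wlog hD : 0 < p.derivative.eval y generalizing p p'
  · have hne : p.derivative.eval y ≠ 0 := fun h0 => hyZ (H.mem y h0)
    have hlt : p.derivative.eval y < 0 := lt_of_le_of_ne (not_lt.1 hD) hne
    obtain ⟨y', h1, h2⟩ := this H.neg (by simpa using hy) (by simpa using hlt)
    exact ⟨y', by simpa using h1, h2⟩
  obtain ⟨a, hay, ha, haZ⟩ := H.exists_left hy hD
  obtain ⟨b, hyb, hb, hbZ⟩ := H.exists_right hy hD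
  have hc : Continuous fun x => p'.eval (h x) := p'.continuous.comp h.continuous
  obtain ⟨y', hy', h0⟩ := intermediate_value_Ioo (hay.trans hyb).le hc.continuousOn ⟨ha, hb⟩
  exact ⟨y', h0, fun z hz => ⟨fun hzy => (haZ z hz hzy).trans_lt hy'.1,
    fun hyz => hy'.2.trans_le (hbZ z hz hyz)⟩⟩

/-- Rolle: two distinct roots of `p` are separated by a point of `Z`. -/
lemma exists_between (H : Compat Z p p' h) {y₁ y₂ : ℝ} (h1 : p.eval y₁ = 0)
    (h2 : p.eval y₂ = 0) (hlt : y₁ < y₂) : ∃ z ∈ Z, y₁ < z ∧ z < y₂ := by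
  obtain ⟨x, hx, he⟩ := exists_slope p hlt
  rw [h1, h2, sub_zero, zero_eq_mul] at he
  exact ⟨x, H.mem x (he.resolve_right (by linarith)), hx⟩

/-- The matching `h` can be corrected by an automorphism `g` fixing `Z` so that the signs of `p`
and `p'` agree everywhere. -/
lemma exists_fix (H : Compat Z p p' h) :
    ∃ g : ℝ ≃o ℝ, (∀ z ∈ Z, g z = z) ∧
      ∀ t, SignType.sign (p.eval t) = SignType.sign (p'.eval (h (g t))) := by
  classical
  have hp0 : p ≠ 0 := fun h0 => by simpa [h0] using H.deg
  set Y := p.roots.toFinset with hY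
  have memY : ∀ t, t ∈ Y ↔ p.eval t = 0 := fun t => by simp [hY, hp0]
  have hex : ∀ y : ℝ, ∃ y', (y ∈ Z → y' = y) ∧ (p.eval y = 0 → p'.eval (h y') = 0) ∧
      (p.eval y = 0 → ∀ z ∈ Z, (z < y → z < y') ∧ (y < z → y' < z)) := by
    intro y
    by_cases hyZ : y ∈ Z
    · refine ⟨y, fun _ => rfl, fun h0 => ?_, fun _ z _ => ⟨id, id⟩⟩
      rw [← sign_eq_zero_iff, ← H.sign_eq y hyZ, h0, sign_zero]
    · by_cases h0 : p.eval y = 0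
      · obtain ⟨y', h1, h2⟩ := H.exists_root h0 hyZ
        exact ⟨y', fun h => (hyZ h).elim, fun _ => h1, fun _ => h2⟩
      · exact ⟨y, fun _ => rfl, fun h => (h0 h).elim, fun h => (h0 h).elim⟩
  choose φ hφZ hφY hφc using hex
  have hmono : StrictMonoOn φ ((Z ∪ Y : Finset ℝ) : Set ℝ) := by
    intro s hs t ht hst
    simp only [Finset.coe_union, Set.mem_union, Finset.mem_coe, memY] at hs ht
    by_cases hsZ : s ∈ Z
    · rw [hφZ s hsZ]
      rcases ht with ht | ht
      · rwa [hφZ t ht]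
      · exact (hφc t ht s hsZ).1 hst
    · have hs := hs.resolve_left hsZ
      by_cases htZ : t ∈ Z
      · rw [hφZ t htZ]
        exact (hφc s hs t htZ).2 hst
      · have ht := ht.resolve_left htZ
        obtain ⟨z, hz, h1, h2⟩ := H.exists_between hs ht hst
        exact ((hφc s hs z hz).2 h1).trans ((hφc t ht z hz).1 h2)
  obtain ⟨g, hg⟩ := exists_extend φ (Z ∪ Y) hmono
  have hgZ : ∀ z ∈ Z, g z = z := fun z hz => by
    rw [hg z (Finset.mem_union_left _ hz), hφZ z hz]
  have hgY : ∀ y, p.eval y = 0 → g y = φ y := fun y hy =>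
    hg y (Finset.mem_union_right _ ((memY y).2 hy))
  have hroot : ∀ t, p'.eval (h (g t)) = 0 → t ∈ Z ∨ p.eval t = 0 := by
    intro t ht
    by_cases htZ : g t ∈ Z
    · left
      rwa [← g.injective (hgZ _ htZ)]
    · right
      obtain ⟨w, hw, hwc⟩ := H.symm.exists_root ht (by simpa using htZ)
      rw [Finset.forall_mem_image] at hwc
      simp only [OrderIso.lt_iff_lt] at hwc
      obtain ⟨y, rfl⟩ := h.surjective w
      simp only [OrderIso.symm_apply_apply, OrderIso.lt_iff_lt] at hw hwc
      have key : g t = φ y := by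
        have hsep : ∀ y₁ y₂, p'.eval (h y₁) = 0 → p'.eval (h y₂) = 0 → y₁ < y₂ →
            ∃ z ∈ Z, y₁ < z ∧ z < y₂ := by
          intro y₁ y₂ h1 h2 hlt
          obtain ⟨z, hz, h3, h4⟩ := H.symm.exists_between h1 h2 (h.strictMono hlt)
          obtain ⟨x, hx, rfl⟩ := Finset.mem_image.1 hz
          exact ⟨x, hx, by simpa using h3, by simpa using h4⟩
        rcases lt_trichotomy (g t) (φ y) with hlt | heq | hlt
        · obtain ⟨z, hz, h1, h2⟩ := hsep _ _ ht (hφY y hw) hlt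
          have := (hφc y hw z hz).2 ((hwc hz).2 h1)
          exact absurd h2 (not_lt.2 this.le)
        · exact heq
        · obtain ⟨z, hz, h1, h2⟩ := hsep _ _ (hφY y hw) ht hlt
          have := (hφc y hw z hz).1 ((hwc hz).1 h2)
          exact absurd h1 (not_lt.2 this.le)
      rw [← hgY y hw] at key
      rw [g.injective key]
      exact hw
  have hq : Continuous fun x => p'.eval (h (g x)) :=
    p'.continuous.comp (h.continuous.comp g.continuous)
  have hZY : ∀ u ∈ Z ∪ Y, SignType.sign (p.eval u) = SignType.sign (p'.eval (h (g u))) := by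
    intro u hu
    rcases Finset.mem_union.1 hu with hu | hu
    · rw [hgZ u hu, H.sign_eq u hu]
    · rw [memY] at hu
      rw [hgY u hu, hu, hφY u hu]
  have hout : ∀ t, t ∉ Z ∪ Y → t ∉ Z ∧ p.eval t ≠ 0 := fun t ht => by
    simpa [memY] using ht
  have hDq : ∀ t, SignType.sign (p.derivative.eval t) =
      SignType.sign (p'.derivative.eval (h (g t))) := fun t => by
    rw [← sign_eval_fix p.derivative hgZ H.mem t, H.sign_deriv]
  have hDq0 : ∀ t, t ∉ Z → p'.derivative.eval (h (g t)) ≠ 0 := fun t ht => by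
    rw [← sign_ne_zero, ← hDq, sign_ne_zero]
    exact fun h0 => ht (H.mem t h0)
  refine ⟨g, hgZ, fun t => ?_⟩
  by_cases ht : t ∈ Z ∪ Y
  · exact hZY t ht
  by_cases hl : ((Z ∪ Y).filter (· < t)).Nonempty
  · set u := ((Z ∪ Y).filter (· < t)).max' hl with hu
    have hu' := Finset.mem_filter.1 (((Z ∪ Y).filter (· < t)).max'_mem hl)
    rw [← hu] at hu'
    have hfree : ∀ x ∈ Ioc u t, x ∉ Z ∪ Y := fun x hx hxm => by
      rcases hx.2.lt_or_eq with h1 | rfl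
      · exact absurd (Finset.le_max' _ _ (Finset.mem_filter.2 ⟨hxm, h1⟩)) (not_le.2 hx.1)
      · exact ht hxm
    have hs := hZY u hu'.1
    by_cases h0 : p.eval u = 0
    · have h0' : p'.eval (h (g u)) = 0 := by
        rw [← sign_eq_zero_iff, ← hs, h0, sign_zero]
      have e1 := sign_sub_left p hu'.2 (fun x hx h0 => (hout x (hfree x hx)).1 (H.mem x h0))
      have e2 := sign_sub_left p' (h.strictMono (g.strictMono hu'.2)) (fun x hx => by
        obtain ⟨w, rfl⟩ := h.surjective x
        obtain ⟨w, rfl⟩ := g.surjective w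
        refine hDq0 w (hout w (hfree w ⟨?_, ?_⟩)).1
        · simpa using hx.1
        · simpa using hx.2)
      rw [h0, sub_zero] at e1
      rw [h0', sub_zero] at e2
      rw [e1, e2, hDq]
    · have h0' : p'.eval (h (g u)) ≠ 0 := by
        rw [← sign_ne_zero, ← hs, sign_ne_zero]
        exact h0
      rw [← sign_eq_of_ne_zero p.continuous (s := u) (t := t) (fun x hx => ?_), hs]
      · refine sign_eq_of_ne_zero hq (s := u) (t := t) (fun x hx hx0 => ?_)
        rw [uIcc_of_le hu'.2.le] at hx
        rcases hx.1.lt_or_eq with h1 | rfl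
        · have h3 := hout x (hfree x ⟨h1, hx.2⟩)
          exact (hroot x hx0).elim h3.1 h3.2
        · exact h0' hx0
      · rw [uIcc_of_le hu'.2.le] at hx
        rcases hx.1.lt_or_eq with h1 | h1
        · exact (hout x (hfree x ⟨h1, hx.2⟩)).2
        · exact h1 ▸ h0
  by_cases hr : ((Z ∪ Y).filter (t < ·)).Nonempty
  · set u := ((Z ∪ Y).filter (t < ·)).min' hr with hu
    have hu' := Finset.mem_filter.1 (((Z ∪ Y).filter (t < ·)).min'_mem hr)
    rw [← hu] at hu'
    have hfree : ∀ x ∈ Ico t u, x ∉ Z ∪ Y := fun x hx hxm => by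
      rcases hx.1.lt_or_eq with h1 | rfl
      · exact absurd (Finset.min'_le _ _ (Finset.mem_filter.2 ⟨hxm, h1⟩)) (not_le.2 hx.2)
      · exact ht hxm
    have hs := hZY u hu'.1
    by_cases h0 : p.eval u = 0
    · have h0' : p'.eval (h (g u)) = 0 := by
        rw [← sign_eq_zero_iff, ← hs, h0, sign_zero]
      have e1 := sign_sub_right p hu'.2 (fun x hx h0 => (hout x (hfree x hx)).1 (H.mem x h0))
      have e2 := sign_sub_right p' (h.strictMono (g.strictMono hu'.2)) (fun x hx => by
        obtain ⟨w, rfl⟩ := h.surjective x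
        obtain ⟨w, rfl⟩ := g.surjective w
        refine hDq0 w (hout w (hfree w ⟨?_, ?_⟩)).1
        · simpa using hx.1
        · simpa using hx.2)
      rw [h0, zero_sub, Left.sign_neg] at e1
      rw [h0', zero_sub, Left.sign_neg] at e2
      rw [← neg_inj, e1, e2, hDq]
    · have h0' : p'.eval (h (g u)) ≠ 0 := by
        rw [← sign_ne_zero, ← hs, sign_ne_zero]
        exact h0
      rw [← sign_eq_of_ne_zero p.continuous (s := u) (t := t) (fun x hx => ?_), hs]
      · refine sign_eq_of_ne_zero hq (s := u) (t := t) (fun x hx hx0 => ?_)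
        rw [uIcc_of_ge hu'.2.le] at hx
        rcases hx.2.lt_or_eq with h1 | rfl
        · have h3 := hout x (hfree x ⟨hx.1, h1⟩)
          exact (hroot x hx0).elim h3.1 h3.2
        · exact h0' hx0
      · rw [uIcc_of_ge hu'.2.le] at hx
        rcases hx.2.lt_or_eq with h1 | h1
        · exact (hout x (hfree x ⟨hx.1, h1⟩)).2
        · exact h1 ▸ h0
  -- without points of `Z ∪ Y`, the polynomial `p` would be monotone, hence would have a root
  · exfalso
    have hempty : ∀ x, x ∉ Z ∪ Y := fun x hx => by
      rcases lt_trichotomy x t with h1 | rfl | h1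
      · exact hl ⟨x, Finset.mem_filter.2 ⟨hx, h1⟩⟩
      · exact ht hx
      · exact hr ⟨x, Finset.mem_filter.2 ⟨hx, h1⟩⟩
    have hD0 : ∀ x, p.derivative.eval x ≠ 0 := fun x h0 => (hout x (hempty x)).1 (H.mem x h0)
    have : ∃ x, p.eval x = 0 := by
      rcases lt_or_gt_of_ne (hD0 0) with hlt | hlt
      · obtain ⟨a, -, ha⟩ := exists_neg_left (-p) (by simpa using H.deg) (t := 0)
          (fun x _ => by simpa using hD0 x) (by simpa using hlt)
        obtain ⟨b, -, hb⟩ := exists_pos_right (-p) (by simpa using H.deg) (t := 0)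
          (fun x _ => by simpa using hD0 x) (by simpa using hlt)
        simp only [Polynomial.eval_neg, Left.neg_neg_iff, Left.neg_pos_iff] at ha hb
        exact mem_range_of_exists_le_of_exists_ge p.continuous ⟨b, hb.le⟩ ⟨a, ha.le⟩
      · obtain ⟨a, -, ha⟩ := exists_neg_left p H.deg (t := 0) (fun x _ => hD0 x) hlt
        obtain ⟨b, -, hb⟩ := exists_pos_right p H.deg (t := 0) (fun x _ => hD0 x) hlt
        exact mem_range_of_exists_le_of_exists_ge p.continuous ⟨a, ha.le⟩ ⟨b, hb.le⟩
    obtain ⟨x, hx⟩ := this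
    exact (hout x (hempty x)).2 hx

end Compat

end OMinPaper
namespace OMinPaper

/-! ### Sign diagrams of parametrised families of polynomials -/

section Family

open Polynomial

variable {A : Type*} [CommRing A]

/-- Two real points of the ring `A` give the same signs to all elements of `Ψ`. -/
def Agree (Ψ : Finset A) (e e' : A →+* ℝ) : Prop :=
  ∀ a ∈ Ψ, SignType.sign (e a) = SignType.sign (e' a)

lemma Agree.mono {Ψ Ψ' : Finset A} {e e' : A →+* ℝ} (h : Agree Ψ' e e') (hs : Ψ ⊆ Ψ') :
    Agree Ψ e e' := fun a ha => h a (hs ha)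

/-- The sign diagram of the family `Φ` of polynomials over `A` is controlled by the signs of
finitely many elements of `A`: if two real points of `A` agree on them, then an order automorphism
of `ℝ` carries the signs of the specialised family at one point to those at the other. -/
def Good (Φ : Finset A[X]) : Prop :=
  ∃ Ψ : Finset A, ∀ e e' : A →+* ℝ, Agree Ψ e e' → ∃ h : ℝ ≃o ℝ, ∀ P ∈ Φ, ∀ t,
    SignType.sign ((P.map e).eval t) = SignType.sign ((P.map e').eval (h t))

/-- Pseudo-division by `P`, seen as a polynomial of formal degree `n`; the power of the leading
coefficient is even so that it does not affect signs. -/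
lemma exists_pseudo_rem (P : A[X]) (n : ℕ) (hP : P.degree < (n + 1 : ℕ)) (N : ℕ) :
    ∀ p : A[X], p.degree < N → ∃ (m : ℕ) (g r : A[X]),
      C (P.coeff n) ^ (2 * m) * p = P * g + r ∧ r.degree < n := by
  induction N with
  | zero =>
    intro p hp
    have : p = 0 := by simpa using hp
    exact ⟨0, 0, 0, by simp [this], by simp⟩
  | succ N ih =>
    intro p hp
    by_cases hN : N < n
    · exact ⟨0, 0, p, by simp, hp.trans_le (by exact_mod_cast hN)⟩
    · obtain ⟨m, g, r, h1, h2⟩ := ih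
        (C (P.coeff n) * p - C (p.coeff N) * (X ^ (N - n) * P)) (by
          rw [degree_lt_iff_coeff_zero] at hp hP ⊢
          intro k hk
          rw [coeff_sub, coeff_C_mul, coeff_C_mul, coeff_X_pow_mul', if_pos (by omega)]
          rcases hk.eq_or_lt with rfl | hk
          · rw [show N - (N - n) = n by omega]
            ring
          · rw [hp k hk, hP (k - (N - n)) (by omega)]
            ring)
      refine ⟨m + 1, C (P.coeff n) * g +
        C (P.coeff n) ^ (2 * m + 1) * C (p.coeff N) * X ^ (N - n), C (P.coeff n) * r, ?_, ?_⟩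
      · linear_combination C (P.coeff n) * h1
      · rw [degree_lt_iff_coeff_zero] at h2 ⊢
        intro k hk
        rw [coeff_C_mul, h2 k hk, mul_zero]

/-- At the roots of `P`, the sign of `p` is that of the pseudo-remainder, provided the formal
leading coefficient of `P` does not vanish at `e`. -/
lemma sign_pseudo_rem {P p g r : A[X]} {n m : ℕ}
    (h : C (P.coeff n) ^ (2 * m) * p = P * g + r) (e : A →+* ℝ) (hc : e (P.coeff n) ≠ 0) {t : ℝ}
    (ht : (P.map e).eval t = 0) :
    SignType.sign ((p.map e).eval t) = SignType.sign ((r.map e).eval t) := by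
  have := congrArg (fun q => (q.map e).eval t) h
  simp only [Polynomial.map_mul, Polynomial.map_pow, map_C, eval_mul, eval_pow, eval_C,
    Polynomial.map_add, eval_add, ht, zero_mul, zero_add] at this
  rw [← this, mul_comm, sign_mul_pos]
  rw [pow_mul]
  positivity

/-- Finitely many polynomials of degree `< n` suffice to read off the sign of `p` at the roots of
`P`, whichever of the leading coefficients of `P` vanish. -/
lemma exists_rems (p : A[X]) (n : ℕ) : ∀ P : A[X], P.degree < (n + 1 : ℕ) →
    ∃ R : Finset A[X], ∃ Ψ : Finset A, (∀ r ∈ R, r.degree < n) ∧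
      ∀ e e' : A →+* ℝ, Agree Ψ e e' → P.map e ≠ 0 → ∃ r ∈ R,
        (∀ t, (P.map e).eval t = 0 →
          SignType.sign ((p.map e).eval t) = SignType.sign ((r.map e).eval t)) ∧
        (∀ t, (P.map e').eval t = 0 →
          SignType.sign ((p.map e').eval t) = SignType.sign ((r.map e').eval t)) := by
  classical
  induction n with
  | zero =>
    intro P hP
    obtain ⟨m, g, r, h1, h2⟩ := exists_pseudo_rem P 0 hP (p.natDegree + 1) p
      (degree_le_natDegree.trans_lt (by exact_mod_cast Nat.lt_succ_self _))
    refine ⟨{r}, {P.coeff 0}, by simpa using h2, fun e e' hA hne => ⟨r, by simp, ?_⟩⟩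
    have hc : e (P.coeff 0) ≠ 0 := fun h0 => hne (by
      ext k
      rcases k with _ | k
      · simpa using h0
      · rw [degree_lt_iff_coeff_zero] at hP
        simp [hP (k + 1) (by omega)])
    have hc' : e' (P.coeff 0) ≠ 0 := by
      rw [← sign_ne_zero, ← hA _ (by simp), sign_ne_zero]
      exact hc
    exact ⟨fun t => sign_pseudo_rem h1 e hc, fun t => sign_pseudo_rem h1 e' hc'⟩
  | succ n ih =>
    intro P hP
    obtain ⟨m, g, r, h1, h2⟩ := exists_pseudo_rem P (n + 1) hP (p.natDegree + 1) p
      (degree_le_natDegree.trans_lt (by exact_mod_cast Nat.lt_succ_self _))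
    obtain ⟨R, Ψ, hR, hΨ⟩ := ih (P.erase (n + 1)) (by
      rw [degree_lt_iff_coeff_zero] at hP ⊢
      intro k hk
      rw [coeff_erase]
      split_ifs with h
      · rfl
      · exact hP k (by omega))
    refine ⟨insert r R, insert (P.coeff (n + 1)) Ψ, ?_, fun e e' hA hne => ?_⟩
    · intro q hq
      rcases Finset.mem_insert.1 hq with rfl | hq
      · exact h2
      · exact (hR q hq).trans (by exact_mod_cast Nat.lt_succ_self n)
    · have hs := hA _ (Finset.mem_insert_self _ _)
      by_cases hc : e (P.coeff (n + 1)) = 0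
      · have hc' : e' (P.coeff (n + 1)) = 0 := by
          rw [← sign_eq_zero_iff, ← hs, hc, sign_zero]
        have key : ∀ f : A →+* ℝ, f (P.coeff (n + 1)) = 0 →
            (P.erase (n + 1)).map f = P.map f := by
          intro f hf
          ext k
          rw [coeff_map, coeff_map, coeff_erase]
          split_ifs with h
          · rw [h, hf, map_zero]
          · rfl
        obtain ⟨q, hq, h3⟩ := hΨ e e' (hA.mono (Finset.subset_insert _ _)) (by rwa [key e hc])
        rw [key e hc, key e' hc'] at h3
        exact ⟨q, Finset.mem_insert_of_mem hq, h3⟩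
      · have hc' : e' (P.coeff (n + 1)) ≠ 0 := by
          rw [← sign_ne_zero, ← hs, sign_ne_zero]
          exact hc
        have hsign := fun t => sign_pseudo_rem h1 e' hc' (t := t)
        exact ⟨r, Finset.mem_insert_self _ _, fun t => sign_pseudo_rem h1 e hc, hsign⟩

/-- One polynomial `p` is added to the sign diagram of a family `S` containing its derivative: it
suffices that the automorphism `h` matching `S` also matches the signs of `p` at the roots of the
nonzero members of `S`. -/
lemma exists_iso_insert {p : A[X]} {n : ℕ} (hn : n ≠ 0) {S : Finset A[X]}
    (hD : derivative p ∈ S) {e e' : A →+* ℝ} {h : ℝ ≃o ℝ}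
    (hc : e (p.coeff n) ≠ 0) (hc' : e' (p.coeff n) ≠ 0)
    (hS : ∀ P ∈ S, ∀ t, SignType.sign ((P.map e).eval t) =
      SignType.sign ((P.map e').eval (h t)))
    (hp : ∀ P ∈ S, P.map e ≠ 0 → ∀ t, (P.map e).eval t = 0 →
      SignType.sign ((p.map e).eval t) = SignType.sign ((p.map e').eval (h t))) :
    ∃ k : ℝ ≃o ℝ, ∀ P, P = p ∨ P ∈ S → ∀ t,
      SignType.sign ((P.map e).eval t) = SignType.sign ((P.map e').eval (k t)) := by
  classical
  have hdeg : ∀ f : A →+* ℝ, f (p.coeff n) ≠ 0 → 0 < (p.map f).degree := fun f hf =>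
    lt_of_lt_of_le (by exact_mod_cast Nat.pos_of_ne_zero hn)
      (le_degree_of_ne_zero (n := n) (by rwa [coeff_map]))
  set Z : Finset ℝ := S.biUnion fun P => (P.map e).roots.toFinset with hZ
  have hmem : ∀ P ∈ S, P.map e ≠ 0 → ∀ t, (P.map e).eval t = 0 → t ∈ Z := by
    intro P hP hne t ht
    exact Finset.mem_biUnion.2 ⟨P, hP, by simp [hne, ht]⟩
  have hD0 : (derivative p).map e ≠ 0 := by
    rw [← derivative_map]
    intro h0
    have h1 := Polynomial.derivative_eq_zero.1 h0
    have h2 := natDegree_pos_iff_degree_pos.2 (hdeg e hc)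
    omega
  have H : Compat Z (p.map e) (p.map e') h := by
    refine ⟨hdeg e hc, hdeg e' hc', fun t => ?_, fun t ht => ?_, fun z hz => ?_⟩
    · simpa only [derivative_map] using hS _ hD t
    · exact hmem _ hD hD0 t (by rwa [← derivative_map])
    · obtain ⟨P, hP, hzP⟩ := Finset.mem_biUnion.1 hz
      have h1 := Multiset.mem_toFinset.1 hzP
      exact hp P hP (ne_zero_of_mem_roots h1) z (isRoot_of_mem_roots h1)
  obtain ⟨g, hgZ, hg⟩ := H.exists_fix
  refine ⟨g.trans h, fun P hP t => ?_⟩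
  rcases hP with rfl | hP
  · exact hg t
  · rw [OrderIso.trans_apply, ← hS P hP (g t)]
    by_cases hne : P.map e = 0
    · simp [hne]
    · rw [sign_eval_fix _ hgZ (hmem P hP hne)]

/-- Induction on the degree bound `n`, then on the number of members of degree exactly `n`: such a
member `p` is traded for its derivative and its pseudo-remainders, or, where its leading
coefficient vanishes, for its truncation. All of these have degree `< n`. -/
lemma good_of_degree_lt (n : ℕ) : ∀ Φ : Finset A[X], (∀ P ∈ Φ, P.degree < n) → Good Φ := by
  classical
  induction n with
  | zero =>
    intro Φ hΦ
    refine ⟨∅, fun e e' _ => ⟨OrderIso.refl ℝ, fun P hP t => ?_⟩⟩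
    have : P = 0 := by simpa using hΦ P hP
    simp [this]
  | succ n ih =>
    suffices hLH : ∀ H : Finset A[X], (∀ P ∈ H, P.degree < (n + 1 : ℕ)) →
        ∀ L : Finset A[X], (∀ P ∈ L, P.degree < n) → Good (L ∪ H) by
      intro Φ hΦ
      simpa using hLH Φ hΦ ∅ (by simp)
    intro H
    induction H using Finset.induction_on with
    | empty =>
      intro _ L hL
      simpa using ih L hL
    | insert p H hpH ihH =>
      intro hH L hL
      have hp : p.degree < (n + 1 : ℕ) := hH p (by simp)
      have hH' : ∀ P ∈ H, P.degree < (n + 1 : ℕ) := fun P hP => hH P (by simp [hP])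
      have hlt : ∀ P : A[X], P.degree < n → P.degree < (n + 1 : ℕ) := fun P hP =>
        hP.trans (by exact_mod_cast Nat.lt_succ_self n)
      have hcoeff := (degree_lt_iff_coeff_zero _ _).1 hp
      -- the case where the leading coefficient of `p` vanishes
      obtain ⟨Ψ₁, hΨ₁⟩ := ihH hH' (insert (p.erase n) L) (by
        intro P hP
        rcases Finset.mem_insert.1 hP with rfl | hP
        · rw [degree_lt_iff_coeff_zero]
          intro k hk
          rw [coeff_erase]
          split_ifs with h
          · rfl
          · exact hcoeff k (by omega)
        · exact hL P hP)
      have herase : ∀ f : A →+* ℝ, f (p.coeff n) = 0 → (p.erase n).map f = p.map f := by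
        intro f hf
        ext k
        rw [coeff_map, coeff_map, coeff_erase]
        split_ifs with h
        · rw [h, hf, map_zero]
        · rfl
      by_cases hn : n = 0
      · subst hn
        refine ⟨insert (p.coeff 0) Ψ₁, fun e e' hA => ?_⟩
        obtain ⟨h, hh⟩ := hΨ₁ e e' (hA.mono (Finset.subset_insert _ _))
        refine ⟨h, fun P hP t => ?_⟩
        by_cases hPp : P = p
        · have : p = C (p.coeff 0) := eq_C_of_degree_le_zero (by
            rw [degree_le_iff_coeff_zero]
            intro k hk
            exact hcoeff k (by exact_mod_cast hk))
          rw [hPp, this]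
          simpa using hA _ (Finset.mem_insert_self _ _)
        · refine hh P ?_ t
          simp only [Finset.mem_union, Finset.mem_insert] at hP ⊢
          tauto
      · set S : Finset A[X] := insert (derivative p) (L ∪ H) with hSdef
        have hDdeg : (derivative p).degree < n := by
          rw [degree_lt_iff_coeff_zero]
          intro k hk
          rw [coeff_derivative, hcoeff (k + 1) (by omega), zero_mul]
        have hSdeg : ∀ P ∈ S, P.degree < (n + 1 : ℕ) := by
          intro P hP
          simp only [hSdef, Finset.mem_insert, Finset.mem_union] at hP
          rcases hP with rfl | hP | hP
          · exact hlt _ hDdeg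
          · exact hlt _ (hL P hP)
          · exact hH' P hP
        have hrem := fun P : S => exists_rems p n P.1 (hSdeg P.1 P.2)
        choose R Ψ hR hΨ using hrem
        obtain ⟨Ψ₂, hΨ₂⟩ := ihH hH' (insert (derivative p) L ∪ S.attach.biUnion R) (by
          intro P hP
          simp only [Finset.mem_union, Finset.mem_insert, Finset.mem_biUnion] at hP
          rcases hP with (rfl | hP) | ⟨Q, -, hP⟩
          · exact hDdeg
          · exact hL P hP
          · exact hR Q P hP)
        refine ⟨insert (p.coeff n) (Ψ₁ ∪ Ψ₂ ∪ S.attach.biUnion Ψ), fun e e' hA => ?_⟩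
        have hs := hA _ (Finset.mem_insert_self _ _)
        by_cases hc : e (p.coeff n) = 0
        · have hc' : e' (p.coeff n) = 0 := by
            rw [← sign_eq_zero_iff, ← hs, hc, sign_zero]
          obtain ⟨h, hh⟩ := hΨ₁ e e' (hA.mono fun a ha => by simp [ha])
          refine ⟨h, fun P hP t => ?_⟩
          by_cases hPp : P = p
          · rw [hPp, ← herase e hc, ← herase e' hc']
            exact hh _ (by simp) t
          · refine hh P ?_ t
            simp only [Finset.mem_union, Finset.mem_insert] at hP ⊢
            tauto
        · have hc' : e' (p.coeff n) ≠ 0 := by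
            rw [← sign_ne_zero, ← hs, sign_ne_zero]
            exact hc
          obtain ⟨h, hh⟩ := hΨ₂ e e' (hA.mono fun a ha => by simp [ha])
          have hSh : ∀ P ∈ S, ∀ t, SignType.sign ((P.map e).eval t) =
              SignType.sign ((P.map e').eval (h t)) := by
            intro P hP
            refine hh P ?_
            simp only [hSdef, Finset.mem_union, Finset.mem_insert] at hP ⊢
            tauto
          obtain ⟨k, hk⟩ := exists_iso_insert hn (Finset.mem_insert_self _ _) hc hc' hSh
            (fun P hP hne t ht => by
              obtain ⟨r, hr, h1, h2⟩ := hΨ ⟨P, hP⟩ e e' (hA.mono fun a ha => by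
                refine Finset.mem_insert_of_mem (Finset.mem_union_right _ ?_)
                exact Finset.mem_biUnion.2 ⟨⟨P, hP⟩, Finset.mem_attach _ _, ha⟩) hne
              have hrt := hh r (Finset.mem_union_left _ (Finset.mem_union_right _
                (Finset.mem_biUnion.2 ⟨⟨P, hP⟩, Finset.mem_attach _ _, hr⟩))) t
              rw [h1 t ht, hrt, h2]
              rw [← sign_eq_zero_iff, ← hSh P hP t, ht, sign_zero])
          refine ⟨k, fun P hP => hk P ?_⟩
          simp only [Finset.mem_union, Finset.mem_insert] at hP ⊢
          tauto

theorem good (Φ : Finset A[X]) : Good Φ :=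
  good_of_degree_lt (Φ.sup natDegree + 1) Φ fun P hP =>
    degree_le_natDegree.trans_lt
      (by exact_mod_cast Nat.lt_succ_of_le (Finset.le_sup (f := natDegree) hP))

end Family

end OMinPaper
namespace OMinPaper

/-! ### First-order formulas are controlled by signs of polynomials -/

lemma exists_term_poly {α : Type*} (t : (Language.ring[[(univ : Set ℝ)]]).Term α) :
    ∃ f : MvPolynomial α ℝ, ∀ v : α → ℝ, t.realize v = MvPolynomial.eval v f := by
  induction t with
  | var a => exact ⟨MvPolynomial.X a, fun v => by simp⟩
  | func f ts ih =>
    choose F hF using ih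
    rcases f with g | c
    · cases g with
      | add => exact ⟨F 0 + F 1, fun v => by
          rw [map_add, ← hF, ← hF]; rfl⟩
      | mul => exact ⟨F 0 * F 1, fun v => by
          rw [map_mul, ← hF, ← hF]; rfl⟩
      | neg => exact ⟨-F 0, fun v => by
          rw [map_neg, ← hF]; rfl⟩
      | zero => exact ⟨0, fun v => by
          rw [map_zero]; rfl⟩
      | one => exact ⟨1, fun v => by
          rw [map_one]; rfl⟩
    · rename_i l
      rcases l with _ | l
      · exact ⟨MvPolynomial.C (c : (univ : Set ℝ)).1, fun v => by
          rw [MvPolynomial.eval_C]; rfl⟩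
      · exact isEmptyElim (α := (constantsOn (univ : Set ℝ)).Functions (l + 1)) c

/-- A polynomial in the variables `α ⊕ Fin (n + 1)`, regarded as a polynomial in the last one. -/
noncomputable def lastVar (α : Type*) (n : ℕ) :
    MvPolynomial (α ⊕ Fin (n + 1)) ℝ →+* Polynomial (MvPolynomial (α ⊕ Fin n) ℝ) :=
  MvPolynomial.eval₂Hom (Polynomial.C.comp MvPolynomial.C)
    (Sum.elim (fun a => Polynomial.C (MvPolynomial.X (Sum.inl a)))
      (Fin.snoc (α := fun _ => Polynomial (MvPolynomial (α ⊕ Fin n) ℝ))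
        (fun j => Polynomial.C (MvPolynomial.X (Sum.inr j))) Polynomial.X))

lemma eval_lastVar {α : Type*} {n : ℕ} (f : MvPolynomial (α ⊕ Fin (n + 1)) ℝ) (v : α → ℝ)
    (xs : Fin n → ℝ) (t : ℝ) :
    ((lastVar α n f).map (MvPolynomial.eval (Sum.elim v xs))).eval t =
      MvPolynomial.eval (Sum.elim v (Fin.snoc (α := fun _ => ℝ) xs t)) f := by
  rw [← Polynomial.coe_evalRingHom, ← Polynomial.coe_mapRingHom, ← RingHom.comp_apply,
    ← RingHom.comp_apply]
  congr 1
  apply MvPolynomial.ringHom_ext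
  · intro r
    simp [lastVar]
  · rintro (a | j)
    · simp [lastVar]
    · induction j using Fin.lastCases with
      | last => simp [lastVar]
      | cast j => simp [lastVar]

/-- Quantifier elimination in semantic form: the truth value of a formula at a point depends only
on the signs of finitely many polynomials there. -/
theorem exists_signs {α : Type*} {n : ℕ}
    (φ : (Language.ring[[(univ : Set ℝ)]]).BoundedFormula α n) :
    ∃ Φ : Finset (MvPolynomial (α ⊕ Fin n) ℝ), ∀ v v' xs xs',
      Agree Φ (MvPolynomial.eval (Sum.elim v xs)) (MvPolynomial.eval (Sum.elim v' xs')) →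
      (φ.Realize v xs ↔ φ.Realize v' xs') := by
  classical
  induction φ with
  | falsum => exact ⟨∅, fun v v' xs xs' _ => Iff.rfl⟩
  | equal t₁ t₂ =>
    obtain ⟨f, hf⟩ := exists_term_poly t₁
    obtain ⟨g, hg⟩ := exists_term_poly t₂
    refine ⟨{f - g}, fun v v' xs xs' h => ?_⟩
    have := h (f - g) (by simp)
    simp only [BoundedFormula.Realize, hf, hg]
    rw [← sub_eq_zero, ← map_sub, ← sign_eq_zero_iff, this, sign_eq_zero_iff, map_sub,
      sub_eq_zero]
  | rel R ts => rcases R with R | R <;> exact isEmptyElim R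
  | imp φ ψ ih₁ ih₂ =>
    obtain ⟨Φ, hΦ⟩ := ih₁
    obtain ⟨Ψ, hΨ⟩ := ih₂
    refine ⟨Φ ∪ Ψ, fun v v' xs xs' h => ?_⟩
    rw [BoundedFormula.realize_imp, BoundedFormula.realize_imp,
      hΦ v v' xs xs' (h.mono Finset.subset_union_left),
      hΨ v v' xs xs' (h.mono Finset.subset_union_right)]
  | @all n φ ih =>
    obtain ⟨Φ, hΦ⟩ := ih
    obtain ⟨Ψ, hΨ⟩ := good (Φ.image (lastVar α n))
    refine ⟨Ψ, fun v v' xs xs' h => ?_⟩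
    obtain ⟨k, hk⟩ := hΨ _ _ h
    have key : ∀ t, φ.Realize v (Fin.snoc xs t) ↔ φ.Realize v' (Fin.snoc xs' (k t)) := by
      intro t
      refine hΦ _ _ _ _ fun f hf => ?_
      have := hk _ (Finset.mem_image_of_mem _ hf) t
      rwa [eval_lastVar, eval_lastVar] at this
    rw [BoundedFormula.realize_all, BoundedFormula.realize_all]
    exact ⟨fun H t => by simpa using (key (k.symm t)).1 (H _), fun H t => (key t).2 (H _)⟩

lemma Semialgebraic.exists_signs {k : ℕ} {D : Set (Fin k → ℝ)} (hD : Semialgebraic D) :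
    ∃ Φ : Finset (MvPolynomial (Fin k) ℝ), ∀ v v' : Fin k → ℝ,
      Agree Φ (MvPolynomial.eval v) (MvPolynomial.eval v') → (v ∈ D ↔ v' ∈ D) := by
  classical
  obtain ⟨φ, rfl⟩ := hD
  obtain ⟨Φ, hΦ⟩ := OMinPaper.exists_signs φ
  refine ⟨Φ.image (MvPolynomial.rename (Sum.elim id Fin.elim0)), fun v v' h => ?_⟩
  rw [Set.mem_ofPred, Set.mem_ofPred]
  refine hΦ v v' _ _ fun f hf => ?_
  have hv : ∀ (w : Fin k → ℝ) (xs : Fin 0 → ℝ), w ∘ Sum.elim id Fin.elim0 = Sum.elim w xs := by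
    intro w xs
    funext x
    rcases x with x | x
    · rfl
    · exact x.elim0
  rw [← hv, ← hv, ← MvPolynomial.eval_rename, ← MvPolynomial.eval_rename]
  exact h _ (Finset.mem_image_of_mem _ hf)

end OMinPaper
namespace OMinPaper

/-! ### The filter generated by the type -/

/-- The filter on `ℝ²` generated by the conditions defining `p`. -/
def pFilter : Filter (Fin 2 → ℝ) := Filter.generate pGens

lemma mem_pType_iff {D : Set (Fin 2 → ℝ)} :
    D ∈ pType ↔ Semialgebraic D ∧ D ∈ pFilter := by
  refine and_congr_right fun _ => ?_
  rw [pFilter, Filter.mem_generate_iff]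
  constructor
  · rintro ⟨G, hG, h⟩
    exact ⟨G, hG, G.finite_toSet, fun v hv => h v fun s hs => hv s hs⟩
  · rintro ⟨t, ht, hf, h⟩
    exact ⟨hf.toFinset, fun s hs => ht (by simpa using hs),
      fun v hv => h fun s hs => hv s (by simpa using hs)⟩

lemma eventually_pos : ∀ᶠ v in pFilter, 0 < v 0 :=
  Filter.mem_generate_of_mem (by simp [pGens])

lemma eventually_lt {a : ℝ} (ha : 0 < a) : ∀ᶠ v in pFilter, v 0 < a :=
  Filter.mem_generate_of_mem (Or.inl (Or.inl (Or.inl (Or.inr ⟨a, ha, rfl⟩))))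

lemma eventually_wedge : ∀ᶠ v in pFilter, 0 < v 1 ∧ v 1 < v 0 :=
  Filter.mem_generate_of_mem (Or.inl (Or.inl (Or.inr rfl)))

lemma eventually_lt_mul {a : ℝ} (ha : 0 < a) : ∀ᶠ v in pFilter, v 1 < a * v 0 :=
  Filter.mem_generate_of_mem (Or.inl (Or.inr ⟨a, ha, rfl⟩))

lemma eventually_rpow_lt {a : ℝ} (ha : 0 < a) {q : ℚ} (hq : 1 < q) :
    ∀ᶠ v in pFilter, a * (v 0) ^ (q : ℝ) < v 1 :=
  Filter.mem_generate_of_mem (Or.inr ⟨a, ha, q, hq, rfl⟩)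

/-- Taking `q = 1 + 1/k` in the last family of conditions. -/
lemma eventually_pow_succ_le {ε : ℝ} (hε : 0 < ε) (hε1 : ε ≤ 1) {k : ℕ} (hk : k ≠ 0) :
    ∀ᶠ v in pFilter, v 0 ^ (k + 1) ≤ ε * v 1 ^ k := by
  have hk0 : (0 : ℚ) < k := by exact_mod_cast Nat.pos_of_ne_zero hk
  have hq : (1 : ℚ) < 1 + 1 / k := by
    have : (0 : ℚ) < 1 / k := by positivity
    linarith
  filter_upwards [eventually_pos, eventually_rpow_lt (inv_pos.2 hε) hq] with v hx h
  have h1 : v 0 ^ (((1 + 1 / k : ℚ)) : ℝ) < ε * v 1 := by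
    rwa [inv_mul_lt_iff₀ hε] at h
  have h2 := pow_le_pow_left₀ (Real.rpow_nonneg hx.le _) h1.le k
  rw [← Real.rpow_natCast, ← Real.rpow_mul hx.le] at h2
  have h3 : (((1 + 1 / k : ℚ)) : ℝ) * (k : ℝ) = ((k + 1 : ℕ) : ℝ) := by
    have : (k : ℝ) ≠ 0 := by exact_mod_cast hk
    push_cast
    field_simp
  rw [h3, Real.rpow_natCast, mul_pow] at h2
  have hy : 0 ≤ v 1 := by
    have := (Real.rpow_nonneg hx.le (((1 + 1 / k : ℚ)) : ℝ)).trans h1.le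
    exact nonneg_of_mul_nonneg_right this hε
  exact h2.trans (mul_le_mul_of_nonneg_right (pow_le_of_le_one hε.le hε1 hk) (by positivity))

/-- Along the type, monomials are ordered by total degree and then by the degree in `x₂`. -/
lemma monomial_isLittleO {i j I J : ℕ} (h : I + J < i + j ∨ (I + J = i + j ∧ J < j)) :
    (fun v : Fin 2 → ℝ => v 0 ^ i * v 1 ^ j) =o[pFilter] fun v => v 0 ^ I * v 1 ^ J := by
  rw [Asymptotics.isLittleO_iff]
  intro c hc
  set ε := min c 1 with hεdef
  have hε : 0 < ε := lt_min hc one_pos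
  have hε1 : ε ≤ 1 := min_le_right _ _
  have hεc : ε ≤ c := min_le_left _ _
  have main : ∀ᶠ v in pFilter, v 0 ^ i * v 1 ^ j ≤ ε * (v 0 ^ I * v 1 ^ J) := by
    rcases h with h | ⟨h, hj⟩
    · rcases le_or_gt J j with hJ | hJ
      · filter_upwards [eventually_pos, eventually_lt hε, eventually_wedge] with v hx hxε hy
        obtain ⟨k, rfl⟩ := Nat.exists_eq_add_of_le hJ
        obtain ⟨hy0, hyx⟩ := hy
        have h1 : v 1 ^ k ≤ v 0 ^ k := pow_le_pow_left₀ hy0.le hyx.le k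
        have h2 : v 0 ^ (i + k) ≤ v 0 ^ (I + 1) :=
          pow_le_pow_of_le_one hx.le (hxε.le.trans hε1) (by omega)
        calc v 0 ^ i * v 1 ^ (J + k) = v 0 ^ i * v 1 ^ k * v 1 ^ J := by ring
          _ ≤ v 0 ^ i * v 0 ^ k * v 1 ^ J := by gcongr
          _ = v 0 ^ (i + k) * v 1 ^ J := by ring
          _ ≤ v 0 ^ (I + 1) * v 1 ^ J := by gcongr
          _ = v 0 * (v 0 ^ I * v 1 ^ J) := by ring
          _ ≤ ε * (v 0 ^ I * v 1 ^ J) := by gcongr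
      · obtain ⟨k, rfl⟩ := Nat.exists_eq_add_of_le hJ.le
        filter_upwards [eventually_pos, eventually_lt hε, eventually_wedge,
          eventually_pow_succ_le hε hε1 (k := k) (by omega)] with v hx hxε hy hk
        obtain ⟨hy0, hyx⟩ := hy
        have h2 : v 0 ^ i ≤ v 0 ^ (I + (k + 1)) :=
          pow_le_pow_of_le_one hx.le (hxε.le.trans hε1) (by omega)
        calc v 0 ^ i * v 1 ^ j ≤ v 0 ^ (I + (k + 1)) * v 1 ^ j := by gcongr
          _ = v 0 ^ (k + 1) * (v 0 ^ I * v 1 ^ j) := by ring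
          _ ≤ ε * v 1 ^ k * (v 0 ^ I * v 1 ^ j) := by gcongr
          _ = ε * (v 0 ^ I * v 1 ^ (j + k)) := by ring
    · obtain ⟨k, rfl⟩ := Nat.exists_eq_add_of_le hj.le
      obtain rfl : I = i + k := by omega
      filter_upwards [eventually_pos, eventually_wedge, eventually_lt_mul hε] with v hx hy hyε
      have h1 : v 1 ^ k ≤ (ε * v 0) ^ k := pow_le_pow_left₀ hy.1.le hyε.le k
      have h2 : ε ^ k ≤ ε := pow_le_of_le_one hε.le hε1 (by omega)
      have hy0 := hy.1
      calc v 0 ^ i * v 1 ^ (J + k) = v 1 ^ k * (v 0 ^ i * v 1 ^ J) := by ring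
        _ ≤ (ε * v 0) ^ k * (v 0 ^ i * v 1 ^ J) := by gcongr
        _ = ε ^ k * (v 0 ^ k * v 0 ^ i * v 1 ^ J) := by ring
        _ ≤ ε * (v 0 ^ k * v 0 ^ i * v 1 ^ J) := by gcongr
        _ = ε * (v 0 ^ (i + k) * v 1 ^ J) := by ring
  filter_upwards [main, eventually_pos, eventually_wedge] with v hv hx hy
  have hy0 := hy.1
  rw [Real.norm_of_nonneg (by positivity), Real.norm_of_nonneg (by positivity)]
  exact hv.trans (by gcongr)

/-- Every polynomial has a constant sign along the type: that of the coefficient of its dominant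
monomial. -/
lemma exists_eventually_sign (f : MvPolynomial (Fin 2) ℝ) :
    ∃ s : SignType, ∀ᶠ v in pFilter, SignType.sign (MvPolynomial.eval v f) = s := by
  classical
  rcases f.support.eq_empty_or_nonempty with h0 | hne
  · exact ⟨0, by simp [MvPolynomial.support_eq_empty.1 h0]⟩
  obtain ⟨M, hM, hmin⟩ := f.support.exists_min_image
    (fun m => toLex (m 0 + m 1, m 1)) hne
  have hc : f.coeff M ≠ 0 := MvPolynomial.mem_support_iff.1 hM
  have hrest : (fun v : Fin 2 → ℝ => ∑ m ∈ f.support.erase M, f.coeff m * (v 0 ^ m 0 * v 1 ^ m 1))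
      =o[pFilter] fun v => v 0 ^ M 0 * v 1 ^ M 1 := by
    apply Asymptotics.IsLittleO.fun_sum
    intro m hm
    have hlex : M 0 + M 1 < m 0 + m 1 ∨ (M 0 + M 1 = m 0 + m 1 ∧ M 1 < m 1) := by
      obtain ⟨hmM, hm⟩ := Finset.mem_erase.1 hm
      have hle := hmin m hm
      rw [Prod.Lex.toLex_le_toLex] at hle
      rcases hle with h | ⟨h, h'⟩
      · exact Or.inl h
      · refine Or.inr ⟨h, lt_of_le_of_ne h' fun he => hmM ?_⟩
        simp only at h h' he
        ext i
        fin_cases i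
        · simp only [Fin.zero_eta]
          omega
        · exact he.symm
    exact (monomial_isLittleO hlex).const_mul_left (f.coeff m)
  refine ⟨SignType.sign (f.coeff M), ?_⟩
  filter_upwards [(Asymptotics.isLittleO_iff.1 hrest) (half_pos (abs_pos.2 hc)),
    eventually_pos, eventually_wedge] with v hv hx hy
  have hy0 := hy.1
  have hpos : 0 < v 0 ^ M 0 * v 1 ^ M 1 := by positivity
  rw [MvPolynomial.eval_eq', ← Finset.add_sum_erase _ _ hM]
  simp only [Fin.prod_univ_two]
  set r := ∑ m ∈ f.support.erase M, f.coeff m * (v 0 ^ m 0 * v 1 ^ m 1) with hr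
  set μ := v 0 ^ M 0 * v 1 ^ M 1 with hμ
  rw [Real.norm_eq_abs, Real.norm_of_nonneg hpos.le] at hv
  have hb := abs_le.1 hv
  rcases lt_or_gt_of_ne hc with hneg | hpos'
  · rw [abs_of_neg hneg] at hb
    rw [sign_neg hneg, sign_eq_neg_one_iff]
    nlinarith [mul_pos_of_neg_of_neg hneg (neg_lt_zero.2 hpos)]
  · rw [abs_of_pos hpos'] at hb
    rw [sign_pos hpos', sign_eq_one_iff]
    nlinarith [mul_pos hpos' hpos]

/-! ### Approaching the origin along lines -/

/-- Sets in the type contain initial segments of all lines `x₂ = b x₁` of small positive slope. -/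
lemma eventually_lines {D : Set (Fin 2 → ℝ)} (hD : D ∈ pFilter) :
    ∀ᶠ b in 𝓝[>] (0 : ℝ), ∀ᶠ x in 𝓝[>] (0 : ℝ), ![x, b * x] ∈ D := by
  have hle : Filter.map (fun z : ℝ × ℝ => ![z.2, z.1 * z.2])
      ((𝓝[>] (0 : ℝ)).curry (𝓝[>] (0 : ℝ))) ≤ pFilter := by
    rw [pFilter, Filter.le_generate_iff]
    intro s hs
    rw [Filter.mem_sets, Filter.mem_map]
    change ∀ᶠ z in (𝓝[>] (0 : ℝ)).curry (𝓝[>] (0 : ℝ)), ![z.2, z.1 * z.2] ∈ s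
    rw [Filter.eventually_curry_iff]
    have hpos : ∀ᶠ x in 𝓝[>] (0 : ℝ), 0 < x := self_mem_nhdsWithin
    have hlt : ∀ a : ℝ, 0 < a → ∀ᶠ x in 𝓝[>] (0 : ℝ), x < a := fun a ha =>
      mem_nhdsWithin_of_mem_nhds (Iio_mem_nhds ha)
    rcases hs with (((rfl | ⟨a, ha, rfl⟩) | rfl) | ⟨a, ha, rfl⟩) | ⟨a, ha, q, hq, rfl⟩
    · refine Eventually.of_forall fun b => ?_
      filter_upwards [hpos] with x hx
      simpa using hx
    · refine Eventually.of_forall fun b => ?_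
      filter_upwards [hlt a ha] with x hx
      simpa using hx
    · filter_upwards [hpos, hlt 1 one_pos] with b hb hb1
      filter_upwards [hpos] with x hx
      have h1 : 0 < b * x := mul_pos hb hx
      have h2 : b * x < x := by nlinarith
      simpa using ⟨h1, h2⟩
    · filter_upwards [hlt a ha] with b hb
      filter_upwards [hpos] with x hx
      have h2 : b * x < a * x := by nlinarith
      simpa using h2
    · filter_upwards [hpos] with b hb
      have hq' : (0 : ℝ) < (q : ℝ) - 1 := by
        have : (1 : ℝ) < q := by exact_mod_cast hq
        linarith
      have ht : Tendsto (fun x : ℝ => a * x ^ ((q : ℝ) - 1)) (𝓝[>] 0) (𝓝 0) := by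
        have h1 : ContinuousAt (fun x : ℝ => a * x ^ ((q : ℝ) - 1)) 0 :=
          continuousAt_const.mul (Real.continuousAt_rpow_const _ _ (Or.inr hq'.le))
        have h2 := h1.tendsto
        simp only [Real.zero_rpow hq'.ne', mul_zero] at h2
        exact h2.mono_left nhdsWithin_le_nhds
      filter_upwards [hpos, ht.eventually_lt_const hb] with x hx hxb
      have h3 : x ^ (q : ℝ) = x ^ ((q : ℝ) - 1) * x := by
        rw [Real.rpow_sub_one hx.ne', div_mul_cancel₀ _ hx.ne']
      have h4 : a * x ^ (q : ℝ) < b * x := by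
        rw [h3, ← mul_assoc]
        exact mul_lt_mul_of_pos_right hxb hx
      simpa using h4
  have := hle hD
  rw [Filter.mem_map] at this
  exact Filter.eventually_curry_iff.1 this

instance : pFilter.NeBot := by
  refine ⟨fun h => ?_⟩
  obtain ⟨b, hb⟩ := (eventually_lines (D := ∅) (h ▸ Filter.mem_bot)).exists
  obtain ⟨x, hx⟩ := hb.exists
  exact hx

lemma not_extends {D : Set (Fin 2 → ℝ)} (hD : D ∈ pFilter) :
    ¬ ∃ G : (Fin 2 → ℝ) → ℝ, ContinuousOn G (closure D) ∧ Set.EqOn Fex G D := by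
  rintro ⟨G, hG, hFG⟩
  have hpos : ∀ᶠ x in 𝓝[>] (0 : ℝ), 0 < x := self_mem_nhdsWithin
  have hlt : ∀ a : ℝ, 0 < a → ∀ᶠ x in 𝓝[>] (0 : ℝ), x < a := fun a ha =>
    mem_nhdsWithin_of_mem_nhds (Iio_mem_nhds ha)
  -- along the line of slope `b`, the function `F` is constantly `b`, so `G 0 = b`
  have key : ∀ᶠ b in 𝓝[>] (0 : ℝ), G 0 = b := by
    filter_upwards [eventually_lines hD, hpos, hlt 1 one_pos] with b hb hb0 hb1
    have hcurve : Tendsto (fun x : ℝ => ![x, b * x]) (𝓝[>] 0) (𝓝 0) := by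
      have hc : Continuous fun x : ℝ => ![x, b * x] := by fun_prop
      have h1 := hc.tendsto 0
      have h0 : (![0, b * 0] : Fin 2 → ℝ) = 0 := by
        ext i
        fin_cases i <;> simp
      rw [h0] at h1
      exact h1.mono_left nhdsWithin_le_nhds
    have hmem : (0 : Fin 2 → ℝ) ∈ closure D := mem_closure_of_tendsto hcurve hb
    have hlim : Tendsto (fun x : ℝ => G ![x, b * x]) (𝓝[>] 0) (𝓝 (G 0)) :=
      (hG 0 hmem).tendsto.comp (tendsto_nhdsWithin_iff.2
        ⟨hcurve, hb.mono fun x hx => subset_closure hx⟩)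
    refine tendsto_nhds_unique hlim (tendsto_const_nhds.congr' ?_)
    filter_upwards [hb, hpos] with x hx hx0
    rw [← hFG hx]
    simp [Fex, hx0, hb0, hx0.ne', hb1.le]
  rcases le_or_gt (G 0) 0 with h0 | h0
  · obtain ⟨b, h1, h2⟩ := (key.and hpos).exists
    linarith
  · obtain ⟨b, h1, h2⟩ := (key.and (hlt _ h0)).exists
    linarith

end OMinPaper

/-- (i) `p` is a consistent and complete 2-type over the real ordered
field; (ii) for every semialgebraic `D ⊆ ℝ²` belonging to `p`, the restriction of `F` to
`D` does not extend to a continuous function on `cl(D)`. -/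
theorem statement_3 :
    -- (i) consistency: every finite subset of `p` has nonempty intersection
    (∀ G : Finset (Set (Fin 2 → ℝ)), (∀ D ∈ G, D ∈ OMinPaper.pType) →
        ∃ v : Fin 2 → ℝ, ∀ D ∈ G, v ∈ D) ∧
    -- (i) completeness: for every semialgebraic set, it or its complement is in `p`
    (∀ D : Set (Fin 2 → ℝ), OMinPaper.Semialgebraic D →
        D ∈ OMinPaper.pType ∨ Dᶜ ∈ OMinPaper.pType) ∧
    -- (ii)
    (∀ D ∈ OMinPaper.pType,
        ¬ ∃ G : (Fin 2 → ℝ) → ℝ, ContinuousOn G (closure D) ∧ Set.EqOn OMinPaper.Fex G D) := by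
  classical
  refine ⟨fun G hG => ?_, fun D hD => ?_, fun D hD => ?_⟩
  · have h : ⋂ D ∈ G, D ∈ OMinPaper.pFilter :=
      (Filter.biInter_finset_mem G).2 fun D hD => (OMinPaper.mem_pType_iff.1 (hG D hD)).2
    obtain ⟨v, hv⟩ := Filter.nonempty_of_mem h
    exact ⟨v, fun D hD => Set.mem_iInter₂.1 hv D hD⟩
  · obtain ⟨Φ, hΦ⟩ := hD.exists_signs
    choose s hs using OMinPaper.exists_eventually_sign
    have hall : ∀ᶠ v in OMinPaper.pFilter, ∀ f ∈ Φ,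
        SignType.sign (MvPolynomial.eval v f) = s f :=
      (Filter.eventually_all_finset Φ).2 fun f _ => hs f
    obtain ⟨v₀, hv₀⟩ := hall.exists
    have hiff : ∀ᶠ v in OMinPaper.pFilter, (v ∈ D ↔ v₀ ∈ D) := hall.mono fun v hv =>
      hΦ v v₀ fun f hf => (hv f hf).trans (hv₀ f hf).symm
    by_cases h0 : v₀ ∈ D
    · exact Or.inl (OMinPaper.mem_pType_iff.2 ⟨hD, hiff.mono fun v hv => hv.2 h0⟩)
    · exact Or.inr (OMinPaper.mem_pType_iff.2
        ⟨Set.Definable.compl hD, hiff.mono fun v hv hvD => h0 (hv.1 hvD)⟩)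
  · exact OMinPaper.not_extends (OMinPaper.mem_pType_iff.1 hD).2
end

section
/- Let T be an o-minimal theory in which all principal types are interdefinable, and fix a ∅-definable element denoted 0. For every parameter set A: the relation ∼_A is an equivalence relation on the monster model 𝔠, and ≺_A induces a strict linear order on the set of ∼_A-equivalence classes (that is, ≺_A is transitive, is compatible with ∼_A, and for any two distinct ∼_A-classes represented by a and b, exactly one of a ≺_A b and b ≺_A a holds). -/
/-!
The relation `a ≺_A b` compares how close `dcl(Aa)` and `dcl(Ab)` come to `z` from above. Comparing
witnesses in the linear order shows at once that `≺_A` is transitive (`prec_trans`) and negatively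
transitive (`prec_or_prec`), so everything follows once `≺_A` is irreflexive.

Irreflexivity (`prec_irrefl`) is where interdefinability enters. If `a' ∈ dcl(Aa)` lies above `z`
and no point of `dcl(Aa)` lies in `(z, a')`, then `a'` itself belongs to the set of elements
principal above `z` over `Aaz`, where `dcl(Aaz) = dcl(Aa)` because `z` is `∅`-definable. An
`Aaz`-definable function then sends `a'` to an element larger than every element of `dcl(Aaz)`,
although the image of `a'` is itself in `dcl(Aaz)`.
-/

open FirstOrder FirstOrder.Language Set Topology Filter

namespace OMinPaper

variable {L : FirstOrder.Language} {M : Type*} [L.Structure M]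

/-- A parameter that is definable over the remaining ones can be eliminated: replace it by a new
variable, constrain that variable by the definition of the parameter, and quantify it out. -/
theorem definable_of_definable_union_singleton {α : Type*} {B : Set M} {z : M}
    (hz : z ∈ dcl L B) {s : Set (α → M)} (hs : (B ∪ {z}).Definable L s) :
    B.Definable L s := by
  classical
  obtain ⟨φ, rfl⟩ := definable_iff_exists_formula_sum.1 hs
  let g : ((B ∪ {z} : Set M) ⊕ α) → (B ⊕ (α ⊕ Fin 1)) :=
    Sum.elim (fun x => if h : (x : M) ∈ B then Sum.inl ⟨x, h⟩ else Sum.inr (Sum.inr 0))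
      (fun i => Sum.inr (Sum.inl i))
  have ht : B.Definable L
      {w : α ⊕ Fin 1 → M | (φ.relabel g).Realize (Sum.elim (↑) w)} :=
    definable_iff_exists_formula_sum.2 ⟨_, rfl⟩
  have hz' : B.Definable L {w : α ⊕ Fin 1 → M | w (Sum.inr 0) = z} :=
    Definable.preimage_comp (fun i : Fin 1 => (Sum.inr i : α ⊕ Fin 1)) hz
  have key : ∀ v : α → M, ∀ u : Fin 1 → M, u 0 = z →
      (Sum.elim ((↑) : B → M) (Sum.elim v u)) ∘ g
        = Sum.elim ((↑) : (B ∪ {z} : Set M) → M) v := by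
    intro v u hu
    funext x
    rcases x with ⟨x, hx⟩ | i
    · by_cases h : x ∈ B
      · simp [g, h]
      · have hxz : x = z := by simpa [h] using hx
        subst hxz
        simp [g, h, hu]
    · simp [g]
  convert! (ht.inter hz').exists_of_finite using 1
  ext v
  constructor
  · intro hv
    refine ⟨fun _ => z, ?_, rfl⟩
    change (φ.relabel g).Realize _
    rw [Formula.realize_relabel, key v _ rfl]
    exact hv
  · rintro ⟨u, hu, huz⟩
    have hu : (φ.relabel g).Realize _ := hu
    rw [Formula.realize_relabel, key v u huz] at hu
    exact hu

theorem dcl_mono {A B : Set M} (h : A ⊆ B) : dcl L A ⊆ dcl L B :=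
  fun _ hx => Definable.mono hx h

theorem DefFun₁.apply_mem_dcl {B : Set M} {f : M → M} (hf : DefFun₁ L B f) {x : M}
    (hx : x ∈ dcl L B) : f x ∈ dcl L B := by
  have h1 : B.Definable L {w : Fin 1 ⊕ Fin 1 → M | f (w (Sum.inr 0)) = w (Sum.inl 0)} :=
    Definable.preimage_comp (![Sum.inr 0, Sum.inl 0] : Fin 2 → Fin 1 ⊕ Fin 1) hf
  have h2 : B.Definable L {w : Fin 1 ⊕ Fin 1 → M | w (Sum.inr 0) = x} :=
    Definable.preimage_comp (fun i : Fin 1 => (Sum.inr i : Fin 1 ⊕ Fin 1)) hx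
  change B.Definable L {y : Fin 1 → M | y 0 = f x}
  convert! (h1.inter h2).exists_of_finite using 1
  ext v
  constructor
  · intro hv
    exact ⟨fun _ => x, Eq.symm hv, rfl⟩
  · rintro ⟨u, hu, hux⟩
    have hu : f (u 0) = v 0 := hu
    have hux : u 0 = x := hux
    change v 0 = f x
    rw [← hu, hux]

variable [LinearOrder M] {z : M} {A : Set M}

theorem prec_irrefl (hinter : AllPrincipalInterdef L M) (hz : z ∈ dcl L (∅ : Set M)) (a : M) :
    ¬ Prec L z A a a := by
  rintro ⟨a', ha', hza, hgap⟩
  have hzB : z ∈ dcl L (A ∪ {a}) := dcl_mono (empty_subset _) hz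
  obtain ⟨⟨f, hf, hfP⟩, -⟩ := (hinter (A ∪ {a})).1 z
  have hpos : NearPosInf L (A ∪ {a} ∪ {z}) (f a') :=
    hfP a' ⟨dcl_mono subset_union_left hzB, hza,
      fun d hd => hgap d (definable_of_definable_union_singleton hzB hd)⟩
  exact lt_irrefl _ (hpos _ (hf.apply_mem_dcl (dcl_mono subset_union_left ha')))

theorem prec_trans {a b c : M} (hab : Prec L z A a b) (hbc : Prec L z A b c) :
    Prec L z A a c := by
  obtain ⟨a', ha', hza, hab⟩ := hab
  obtain ⟨b', hb', hzb, hbc⟩ := hbc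
  have hle : a' ≤ b' := not_lt.1 fun h => hab b' hb' ⟨hzb, h⟩
  exact ⟨a', ha', hza, fun d hd h => hbc d hd ⟨h.1, h.2.trans_le hle⟩⟩

/-- Negative transitivity of `≺_A`. -/
theorem prec_or_prec {a c : M} (hac : Prec L z A a c) (b : M) :
    Prec L z A a b ∨ Prec L z A b c := by
  obtain ⟨a', ha', hza, hac⟩ := hac
  by_cases h : ∃ b' ∈ dcl L (A ∪ {b}), b' ∈ Set.Ioo z a'
  · obtain ⟨b', hb', hb⟩ := h
    exact Or.inr ⟨b', hb', hb.1, fun d hd hdb => hac d hd ⟨hdb.1, hdb.2.trans hb.2⟩⟩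
  · exact Or.inl ⟨a', ha', hza, fun d hd hda => h ⟨d, hd, hda⟩⟩

end OMinPaper

open OMinPaper

/-- In (a monster model of) an o-minimal theory in which all principal
types are interdefinable, with distinguished `∅`-definable element `z` (playing the role
of `0`): for every parameter set `A`, `∼_A` is an equivalence relation and `≺_A` induces a
strict linear order on the `∼_A`-classes (it is transitive, compatible with `∼_A`, and for
any two distinct `∼_A`-classes exactly one of `a ≺_A b`, `b ≺_A a` holds). -/
theorem statement_12 (L : FirstOrder.Language) (C : Type*) [L.Structure C] [LinearOrder C]
    (hmin : IsOMinimal L C)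
    (hinter : AllPrincipalInterdef L C)
    (z : C) (hz : z ∈ dcl L (∅ : Set C))
    (A : Set C) :
    Equivalence (Sim L z A) ∧
    (∀ a b c : C, Prec L z A a b → Prec L z A b c → Prec L z A a c) ∧
    (∀ a a' b b' : C, Sim L z A a a' → Sim L z A b b' → Prec L z A a b → Prec L z A a' b') ∧
    (∀ a b : C, ¬ Sim L z A a b → Xor' (Prec L z A a b) (Prec L z A b a)) := by
  have irr := prec_irrefl (A := A) hinter hz
  refine ⟨⟨fun a => ⟨irr a, irr a⟩, fun h => ⟨h.2, h.1⟩, ?_⟩, fun _ _ _ => prec_trans, ?_, ?_⟩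
  · intro a b c hab hbc
    exact ⟨fun h => (prec_or_prec h b).elim hab.1 hbc.1,
      fun h => (prec_or_prec h b).elim hbc.2 hab.2⟩
  · intro a a' b b' ha hb hab
    have hab' : Prec L z A a b' := (prec_or_prec hab b').resolve_right hb.2
    exact (prec_or_prec hab' a').resolve_left ha.1
  · intro a b h
    by_cases hab : Prec L z A a b
    · exact Or.inl ⟨hab, fun hba => irr a (prec_trans hab hba)⟩
    · exact Or.inr ⟨by_contra fun hba => h ⟨hab, hba⟩, hab⟩
end

section
/- Let T be an o-minimal theory in which all principal types are interdefinable, fix a ∅-definable element 0, and let p be an n-type over a parameter set A. Then there is a permutation of the variables of p such that the reordered type is decreasing: for any realization c̄ = ⟨c₁,…,c_n⟩ of the reordered type, c_i ≿_i c_j for all 1 ≤ i < j ≤ n. -/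
/-!
For a fixed base `B`, `a ⊀_B b` says that every positive point of `dcl(Ba)` has a positive point of
`dcl(Bb)` strictly below it. This is a transitive relation (`not_prec_trans`), so the asymmetric
part of `≺_B`, namely `a ≺_B b ∧ ¬ b ≺_B a`, is a strict partial order. A finite set therefore has
an element `a` maximal for it, and maximality of `a` says precisely that `b ≾_B a` for every `b` in
the set. A decreasing ordering of the coordinates is obtained greedily: position `k` receives a
maximal one among the remaining coordinates, over `A` together with the coordinates already placed.
-/

open FirstOrder FirstOrder.Language Set Topology Filter

open OMinPaper

namespace OMinPaper

variable {L : FirstOrder.Language} {M : Type*} [L.Structure M] [LinearOrder M]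

lemma not_prec_iff {z : M} {B : Set M} {a b : M} :
    ¬ Prec L z B a b ↔
      ∀ x ∈ dcl L (B ∪ {a}), z < x → ∃ y ∈ dcl L (B ∪ {b}), z < y ∧ y < x := by
  unfold Prec
  push Not
  rfl

lemma not_prec_trans {z : M} {B : Set M} {a b d : M} (hab : ¬ Prec L z B a b)
    (hbd : ¬ Prec L z B b d) : ¬ Prec L z B a d := by
  rw [not_prec_iff] at *
  intro x hx hzx
  obtain ⟨y, hy, hzy, hyx⟩ := hab x hx hzx
  obtain ⟨w, hw, hzw, hwy⟩ := hbd y hy hzy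
  exact ⟨w, hw, hzw, hwy.trans hyx⟩

/-- Any nonempty subset of a finite family contains a member that is `≿_B` all the others. -/
lemma exists_precSim_max (z : M) (B : Set M) {n : ℕ} (c : Fin n → M) (S : Set (Fin n))
    (hS : S.Nonempty) : ∃ m ∈ S, ∀ j ∈ S, PrecSim L z B (c j) (c m) := by
  let r : Fin n → Fin n → Prop := fun j i =>
    Prec L z B (c i) (c j) ∧ ¬ Prec L z B (c j) (c i)
  have htrans : IsTrans (Fin n) r :=
    ⟨fun i j k hij hjk =>
      ⟨by_contra fun h => not_prec_trans h hij.2 hjk.1, not_prec_trans hij.2 hjk.2⟩⟩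
  have hirr : Std.Irrefl r := ⟨fun i hi => hi.2 hi.1⟩
  have hwf : WellFounded r := Finite.wellFounded_of_trans_of_irrefl r
  obtain ⟨m, hm, hmax⟩ := hwf.has_min S hS
  refine ⟨m, hm, fun j hj => ?_⟩
  have hj' : ¬ (Prec L z B (c m) (c j) ∧ ¬ Prec L z B (c j) (c m)) := hmax j hj
  unfold PrecSim Sim
  tauto

/-- The greedy construction: after `k` steps, the first `k` positions satisfy the requirement
for a decreasing tuple against all later positions. -/
lemma exists_perm_initial (z : M) (A : Set M) {n : ℕ} (c : Fin n → M) (k : ℕ) (hk : k ≤ n) :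
    ∃ σ : Equiv.Perm (Fin n), ∀ i j : Fin n, (i : ℕ) < k → i < j →
      PrecSim L z (A ∪ below (c ∘ σ) i) ((c ∘ σ) j) ((c ∘ σ) i) := by
  induction k with
  | zero => exact ⟨1, fun i j hi => absurd hi (Nat.not_lt_zero _)⟩
  | succ k ih =>
    obtain ⟨σ, hσ⟩ := ih (by omega)
    let q : Fin n := ⟨k, hk⟩
    obtain ⟨m, hm, hmax⟩ := exists_precSim_max (L := L) z (A ∪ below (c ∘ σ) q) (c ∘ σ)
      {j | q ≤ j} ⟨q, le_refl q⟩
    have hqm : q ≤ m := hm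
    -- The chosen coordinate, at position `m ≥ k`, is moved to position `k`.
    have hfix : ∀ i : Fin n, i < q → Equiv.swap q m i = i := fun i hi =>
      Equiv.swap_apply_of_ne_of_ne hi.ne (hi.trans_le hqm).ne
    have hge : ∀ j : Fin n, q ≤ j → q ≤ Equiv.swap q m j := by
      intro j hj
      rw [Equiv.swap_apply_def]
      split_ifs
      exacts [hqm, le_refl q, hj]
    have hbelow : ∀ i : Fin n, i ≤ q →
        below (c ∘ (σ * Equiv.swap q m : Equiv.Perm (Fin n))) i = below (c ∘ σ) i := by
      intro i hi
      refine Set.image_congr fun l hl => ?_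
      simp [hfix l (lt_of_lt_of_le hl hi)]
    refine ⟨σ * Equiv.swap q m, fun i j hi hij => ?_⟩
    have hiq : i ≤ q := Nat.lt_succ_iff.mp hi
    rw [hbelow i hiq]
    rcases hiq.lt_or_eq with hlt | heq
    · have hlt' : i < Equiv.swap q m j := by
        rcases lt_or_ge j q with hj | hj
        · rwa [hfix j hj]
        · exact hlt.trans_le (hge j hj)
      simpa [hfix i hlt] using hσ i (Equiv.swap q m j) hlt hlt'
    · subst heq
      simpa using hmax (Equiv.swap q m j) (hge j hij.le)

end OMinPaper

/-- In (a monster model of) an o-minimal theory in which all principal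
types are interdefinable, every `n`-type over `A` can be reordered to a decreasing type:
for every tuple `c̄` (a realization of the type) there is a permutation `σ` of the
coordinates such that `c̄ ∘ σ` realizes a decreasing type over `A`. -/
theorem statement_13 (L : FirstOrder.Language) (C : Type*) [L.Structure C] [LinearOrder C]
    (hmin : IsOMinimal L C)
    (hinter : AllPrincipalInterdef L C)
    (z : C) (hz : z ∈ dcl L (∅ : Set C))
    (A : Set C) (n : ℕ) (c : Fin n → C) :
    ∃ σ : Equiv.Perm (Fin n), Decreasing L z A (c ∘ σ) := by
  obtain ⟨σ, hσ⟩ := exists_perm_initial (L := L) z A c n le_rfl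
  exact ⟨σ, fun i j hij => hσ i j i.isLt hij⟩
end
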